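/- arXiv:1404.7764 — 2 statements merged into one kernel-verified Lean document; each statement's English description precedes it below -/
import Mathlib

section
/- There exist α₀ ≥ 1 and, for every α ≥ α₀, constants c > 0 and d₀ such that the following holds for all d ≥ d₀. Let G be a bipartite graph with parts X and Y and maximum degree at most d, let 𝒢 be a graph on α·d vertices, and set p⁻ = δ(𝒢)/(α·d). Let χ : Y → V(𝒢) be a random coloring in which each vertex of Y independently receives a uniformly random element of V(𝒢). Fix x ∈ X with d ≤ 2·d_G(x) and a color c₀ ∈ V(𝒢), and let W be the number of vertices y ∈ N_G(x) such that (i) y is the only vertex of N_G(x) with color χ(y), (ii) Bad(y, χ, G) ≤ d/√α, and (iii) c₀χ(y) ∈ E(𝒢). Then Pr( W ≤ p⁻·d_G(x)/2 ) ≤ exp(−c·δ(𝒢)). -/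
open SimpleGraph

def ContainsCopy {α β : Type*} (F : SimpleGraph α) (H : SimpleGraph β) : Prop :=
  ∃ f : F →g H, Function.Injective f

abbrev GraphFamily := Set (Σ n : ℕ, SimpleGraph (Fin n))

def FamFree {β : Type*} (H : SimpleGraph β) (𝓕 : GraphFamily) : Prop :=
  ∀ F ∈ 𝓕, ¬ ContainsCopy F.2 H

noncomputable def extremalNum (n : ℕ) (𝓕 : GraphFamily) : ℕ :=
  sSup {k | ∃ H : SimpleGraph (Fin n), FamFree H 𝓕 ∧ k = H.edgeSet.ncard}

def LocallyInjective {α β : Type*} {F : SimpleGraph α} {G : SimpleGraph β}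
    (φ : F →g G) : Prop :=
  ∀ v : α, Set.InjOn φ (F.neighborSet v)

def NoLocInjHom {α β : Type*} (F : SimpleGraph α) (G : SimpleGraph β) : Prop :=
  ¬ ∃ φ : F →g G, LocallyInjective φ

def ClosedFamily (𝓕 : GraphFamily) : Prop :=
  ∀ (W : Type) [Fintype W] (G : SimpleGraph W),
    (∀ F ∈ 𝓕, NoLocInjHom F.2 G) ↔ FamFree G 𝓕

noncomputable def deg {β : Type*} (H : SimpleGraph β) (v : β) : ℕ :=
  (H.neighborSet v).ncard

noncomputable def minDeg {β : Type*} [Fintype β] (H : SimpleGraph β) : ℕ :=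
  ⨅ v, deg H v

noncomputable def maxDeg {β : Type*} [Fintype β] (H : SimpleGraph β) : ℕ :=
  ⨆ v, deg H v

def RegularDeg {β : Type*} (G : SimpleGraph β) (d : ℕ) : Prop :=
  ∀ v, deg G v = d

noncomputable def Bad {α γ : Type*} (G : SimpleGraph α) (χ : α → γ) (v : α) : ℕ :=
  {u | u ∈ G.neighborSet v ∧ ∃ v', v' ∈ G.neighborSet u ∧ v' ≠ v ∧ χ v' = χ v}.ncard

/-!
Exponential Markov with base `2` reduces the claim to a bound on `𝔼 2 ^ (-W)`. Write `A = N_G(x)`,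
`S = N_𝒢(c₀)` and `N` for the number of colours. Since `W` counts vertices coloured from `S`,
`2 ^ (-W)` is a product over the colours `c ∈ S`. The factor of `c` is at most `2 ^ (-|A ∩ χ⁻¹(c)|)`
plus a total weight of pairs of vertices coloured `c`: such a pair must be present whenever the
colour class inside `A` has two vertices, or its only vertex `y` has large `Bad(y)`. Expanding the
product turns the second summand into requirements `χ(v) = c`. For a fixed choice of pairs the
integrand factors over the independent vertices, and requirements of two different colours at
one vertex contradict each other. So the bound is the same as if the colours were independent:
`𝔼 2 ^ (-W) ≤ (exp (-|A| / 2N) + O(|A| d √α / N²)) ^ |S|`, and as `N = αd` the error term is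
negligible against `|A| / N` for large `α`.
-/

section Expectation

open Finset
open scoped BigOperators

lemma ncard_setOf_le_div_card_le {Ω : Type*} [Fintype Ω] (X : Ω → ℕ) (m : ℝ) :
    ({ω | (X ω : ℝ) ≤ m}.ncard : ℝ) / Nat.card Ω ≤ 2 ^ m * 𝔼 ω, (1 / 2 : ℝ) ^ X ω := by
  classical
  have indicator_le (ω : Ω) : (if (X ω : ℝ) ≤ m then 1 else 0) ≤ 2 ^ m * (1 / 2 : ℝ) ^ X ω := by
    split_ifs with h
    · calc (1 : ℝ) = 2 ^ (X ω : ℝ) * (1 / 2) ^ X ω := by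
            rw [Real.rpow_natCast, ← mul_pow]; norm_num
        _ ≤ 2 ^ m * (1 / 2) ^ X ω := by gcongr; norm_num
    · positivity
  calc ({ω | (X ω : ℝ) ≤ m}.ncard : ℝ) / Nat.card Ω
      = 𝔼 ω, if (X ω : ℝ) ≤ m then (1 : ℝ) else 0 := by
        rw [Fintype.expect_eq_sum_div_card, sum_boole, Set.ncard_eq_toFinset_card',
          Set.toFinset_ofPred, Nat.card_eq_fintype_card]
    _ ≤ 𝔼 ω, 2 ^ m * (1 / 2 : ℝ) ^ X ω := expect_le_expect fun ω _ => indicator_le ω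
    _ = 2 ^ m * 𝔼 ω, (1 / 2 : ℝ) ^ X ω := (mul_expect ..).symm

variable {V K ι : Type*} [Fintype V] [DecidableEq V] [Fintype K]

lemma expect_prod_apply {R : Type*} [Semifield R] [CharZero R] (g : V → K → R) :
    𝔼 f : V → K, ∏ v, g v (f v) = ∏ v, 𝔼 k, g v k := by
  simp only [Fintype.expect_eq_sum_div_card, Fintype.prod_sum, prod_div_distrib, prod_const,
    Fintype.card_fun, Nat.cast_pow, card_univ]

variable [Nonempty K]

lemma half_le_exp_neg_card_div (U : Finset K) :
    1 / 2 ≤ Real.exp (-#U / (2 * Fintype.card K)) := by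
  have hU : (#U : ℝ) ≤ Fintype.card K := mod_cast card_le_univ U
  have : (0 : ℝ) < Fintype.card K := mod_cast Fintype.card_pos
  have exponent_ge : -(1 / 2) ≤ -(#U : ℝ) / (2 * Fintype.card K) := by
    rw [le_div_iff₀ (by positivity)]
    linarith
  linarith [Real.add_one_le_exp (-(#U : ℝ) / (2 * Fintype.card K))]

variable [DecidableEq K]

lemma expect_half_mem_le_exp (U : Finset K) :
    𝔼 k, (if k ∈ U then 1 / 2 else 1 : ℝ) ≤ Real.exp (-#U / (2 * Fintype.card K)) := by
  have expect_eq : 𝔼 k, (if k ∈ U then 1 / 2 else 1 : ℝ) = -#U / (2 * Fintype.card K) + 1 := by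
    have split (k : K) : (if k ∈ U then 1 / 2 else 1 : ℝ) = 1 - if k ∈ U then 1 / 2 else 0 := by
      split_ifs <;> norm_num
    simp only [split, expect_sub_distrib, Fintype.expect_const]
    simp only [Fintype.expect_eq_sum_div_card, sum_ite_mem, univ_inter, sum_const, nsmul_eq_mul]
    ring
  exact expect_eq ▸ Real.add_one_le_exp _

lemma expect_half_mem_mul_forall_eq_le (U M : Finset K) :
    𝔼 k, (if k ∈ U then 1 / 2 else 1 : ℝ) * (if ∀ c ∈ M, k = c then 1 else 0) ≤
      Real.exp (-#U / (2 * Fintype.card K)) * (2 / Fintype.card K) ^ #M := by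
  rcases M.eq_empty_or_nonempty with rfl | ⟨c, hc⟩
  · simpa using expect_half_mem_le_exp U
  by_cases hM : M = {c}
  · subst hM
    calc 𝔼 k, (if k ∈ U then 1 / 2 else 1 : ℝ) * (if ∀ c' ∈ ({c} : Finset K), k = c' then 1 else 0)
        ≤ 𝔼 k, if k = c then (1 : ℝ) else 0 := by
          refine expect_le_expect fun k _ => ?_
          simp only [mem_singleton, forall_eq]
          split_ifs <;> norm_num
      _ = 1 / 2 * (2 / Fintype.card K) ^ #({c} : Finset K) := by
          rw [Fintype.expect_eq_sum_div_card, sum_ite_eq', if_pos (mem_univ c), card_singleton]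
          ring
      _ ≤ _ := by gcongr; exact half_le_exp_neg_card_div U
  · obtain ⟨c', hc', hne⟩ : ∃ c' ∈ M, c' ≠ c := by
      by_contra! h
      exact hM (eq_singleton_iff_unique_mem.2 ⟨hc, h⟩)
    have no_color (k : K) : ¬∀ b ∈ M, k = b := fun h => hne ((h c' hc').symm.trans (h c hc))
    simp only [no_color, if_false, mul_zero, expect_const_zero]
    positivity

lemma prod_pow_card_filter_mem {τ M : Type*} [Fintype τ] [CommMonoid M] (R : τ → Finset V) (r : M) :
    ∏ v, r ^ #{j | v ∈ R j} = ∏ j, r ^ #(R j) := by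
  rw [prod_pow_eq_pow_sum, prod_pow_eq_pow_sum]
  congr 1
  simpa [bipartiteAbove, bipartiteBelow] using
    sum_card_bipartiteAbove_eq_sum_card_bipartiteBelow (s := univ) (t := univ) fun v j => v ∈ R j

lemma expect_half_pow_mul_forall_eq_le {τ : Type*} [Fintype τ] (A : Finset V) (U : Finset K)
    (κ : τ ↪ K) (R : τ → Finset V) :
    𝔼 f : V → K, (1 / 2 : ℝ) ^ #{v ∈ A | f v ∈ U} * (if ∀ j, ∀ v ∈ R j, f v = κ j then 1 else 0) ≤
      Real.exp (-#A / (2 * Fintype.card K)) ^ #U * ∏ j, (2 / Fintype.card K : ℝ) ^ #(R j) := by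
  let penalized (v : V) : Finset K := if v ∈ A then U else ∅
  let required (v : V) : Finset K := ({j | v ∈ R j} : Finset τ).map κ
  have integrand_eq (f : V → K) :
      (1 / 2 : ℝ) ^ #{v ∈ A | f v ∈ U} * (if ∀ j, ∀ v ∈ R j, f v = κ j then 1 else 0) =
        ∏ v, (if f v ∈ penalized v then 1 / 2 else 1 : ℝ) *
          (if ∀ c ∈ required v, f v = c then 1 else 0) := by
    rw [prod_mul_distrib]
    congr 1
    · simp only [prod_ite, prod_const, one_pow, mul_one]
      congr 2
      ext v
      by_cases hv : v ∈ A <;> simp [penalized, hv]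
    · rw [Fintype.prod_ite_zero, prod_const_one]
      congr 1
      simp only [required, mem_map, mem_filter, mem_univ, true_and, forall_exists_index, and_imp,
        forall_apply_eq_imp_iff₂, eq_iff_iff]
      exact forall_comm
  have penalized_exponent : ∑ v, -(#(penalized v) : ℝ) / (2 * Fintype.card K) =
      #U * (-#A / (2 * Fintype.card K)) := by
    simp only [penalized, apply_ite card, card_empty, Nat.cast_ite, Nat.cast_zero, ← sum_div,
      sum_neg_distrib, sum_ite_mem, univ_inter, sum_const, nsmul_eq_mul]
    ring
  calc 𝔼 f : V → K, (1 / 2 : ℝ) ^ #{v ∈ A | f v ∈ U} *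
        (if ∀ j, ∀ v ∈ R j, f v = κ j then 1 else 0)
      = ∏ v, 𝔼 k, (if k ∈ penalized v then 1 / 2 else 1 : ℝ) *
          (if ∀ c ∈ required v, k = c then 1 else 0) := by
        simp only [integrand_eq]
        exact expect_prod_apply fun v k => (if k ∈ penalized v then 1 / 2 else 1 : ℝ) *
          (if ∀ c ∈ required v, k = c then 1 else 0)
    _ ≤ ∏ v, Real.exp (-#(penalized v) / (2 * Fintype.card K)) *
          (2 / Fintype.card K) ^ #(required v) :=
        prod_le_prod (fun v _ => expect_nonneg fun k _ => by positivity)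
          fun v _ => expect_half_mem_mul_forall_eq_le _ _
    _ = Real.exp (-#A / (2 * Fintype.card K)) ^ #U * ∏ j, (2 / Fintype.card K : ℝ) ^ #(R j) := by
        simp only [prod_mul_distrib, ← Real.exp_sum, penalized_exponent, Real.exp_nat_mul,
          required, card_map, prod_pow_card_filter_mem]

variable (A : Finset V) (I : Finset ι) (P : ι → Finset V) {w : ι → ℝ}

lemma expect_half_pow_mul_prod_sum_le (hw : ∀ i ∈ I, 0 ≤ w i) (U T : Finset K) :
    𝔼 f : V → K, (1 / 2 : ℝ) ^ #{v ∈ A | f v ∈ U} *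
        ∏ c ∈ T, ∑ i ∈ I with ∀ v ∈ P i, f v = c, w i ≤
      Real.exp (-#A / (2 * Fintype.card K)) ^ #U *
        (∑ i ∈ I, w i * (2 / Fintype.card K) ^ #(P i)) ^ #T := by
  have expand (f : V → K) : ∏ c ∈ T, ∑ i ∈ I with ∀ v ∈ P i, f v = c, w i =
      ∑ a ∈ Fintype.piFinset fun _ : T => I,
        (∏ c, w (a c)) * if ∀ c : T, ∀ v ∈ P (a c), f v = c then 1 else 0 := by
    rw [← prod_coe_sort]
    simp only [sum_filter]
    rw [prod_univ_sum]
    refine sum_congr rfl fun a _ => ?_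
    rw [Fintype.prod_ite_zero, mul_ite, mul_one, mul_zero]
  calc _ = ∑ a ∈ Fintype.piFinset fun _ : T => I, (∏ c, w (a c)) *
        𝔼 f : V → K, (1 / 2 : ℝ) ^ #{v ∈ A | f v ∈ U} *
          if ∀ c : T, ∀ v ∈ P (a c), f v = c then 1 else 0 := by
        simp only [expand, mul_sum, expect_sum_comm, mul_expect, mul_left_comm]
    _ ≤ ∑ a ∈ Fintype.piFinset fun _ : T => I, (∏ c, w (a c)) *
        (Real.exp (-#A / (2 * Fintype.card K)) ^ #U *
          ∏ c, (2 / Fintype.card K : ℝ) ^ #(P (a c))) := by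
        refine sum_le_sum fun a ha => mul_le_mul_of_nonneg_left ?_ <|
          prod_nonneg fun c _ => hw _ (Fintype.mem_piFinset.1 ha c)
        exact expect_half_pow_mul_forall_eq_le A U (.subtype _) fun c => P (a c)
    _ = Real.exp (-#A / (2 * Fintype.card K)) ^ #U *
          ∏ _c : T, ∑ i ∈ I, w i * (2 / Fintype.card K : ℝ) ^ #(P i) := by
        rw [prod_univ_sum, mul_sum]
        simp only [prod_mul_distrib, mul_left_comm]
    _ = _ := by rw [prod_const, card_univ, Fintype.card_coe]

theorem expect_prod_half_pow_add_sum_le (hw : ∀ i ∈ I, 0 ≤ w i) (S : Finset K) :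
    𝔼 f : V → K, ∏ c ∈ S, ((1 / 2 : ℝ) ^ #{v ∈ A | f v = c} +
        ∑ i ∈ I with ∀ v ∈ P i, f v = c, w i) ≤
      (Real.exp (-#A / (2 * Fintype.card K)) +
        ∑ i ∈ I, w i * (2 / Fintype.card K) ^ #(P i)) ^ #S := by
  have prod_half_pow (f : V → K) (U : Finset K) :
      ∏ c ∈ U, (1 / 2 : ℝ) ^ #{v ∈ A | f v = c} = (1 / 2) ^ #{v ∈ A | f v ∈ U} := by
    rw [prod_pow_eq_pow_sum, sum_card_fiberwise_eq_card_filter]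
  calc _ = ∑ T ∈ S.powerset, 𝔼 f : V → K, (1 / 2 : ℝ) ^ #{v ∈ A | f v ∈ S \ T} *
        ∏ c ∈ T, ∑ i ∈ I with ∀ v ∈ P i, f v = c, w i := by
        simp only [add_comm ((1 / 2 : ℝ) ^ _), prod_add, prod_half_pow, expect_sum_comm, mul_comm]
    _ ≤ ∑ T ∈ S.powerset, Real.exp (-#A / (2 * Fintype.card K)) ^ #(S \ T) *
        (∑ i ∈ I, w i * (2 / Fintype.card K) ^ #(P i)) ^ #T :=
        sum_le_sum fun T _ => expect_half_pow_mul_prod_sum_le A I P hw _ T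
    _ = _ := by
        rw [add_comm, ← sum_pow_mul_eq_add_pow]
        refine sum_congr rfl fun T hT => ?_
        rw [card_sdiff_of_subset (mem_powerset.1 hT), mul_comm]

end Expectation

section CommonNeighbors

open Finset

variable {V K : Type*}

lemma deg_eq_card_neighborFinset (G : SimpleGraph V) (v : V) [Fintype (G.neighborSet v)] :
    deg G v = #(G.neighborFinset v) := by
  rw [← Set.ncard_coe_finset, coe_neighborFinset, deg]

variable [Fintype V]

lemma sum_ncard_commonNeighbors_le (G : SimpleGraph V) {d : ℕ} (hdeg : ∀ v, deg G v ≤ d) (y : V) :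
    ∑ z, (G.commonNeighbors y z).ncard ≤ d * d := by
  classical
  have sum_eq : ∑ z, (G.commonNeighbors y z).ncard = ∑ u ∈ G.neighborFinset y, deg G u := by
    convert sum_card_bipartiteAbove_eq_sum_card_bipartiteBelow (s := univ)
      (t := G.neighborFinset y) G.Adj using 2 with z _ u _
    · rw [← Set.ncard_coe_finset]
      congr 1
      ext u
      simp [bipartiteAbove, mem_commonNeighbors]
    · rw [deg_eq_card_neighborFinset]
      congr 1
      ext z
      simp [bipartiteBelow, G.adj_comm]
  calc ∑ z, (G.commonNeighbors y z).ncard = ∑ u ∈ G.neighborFinset y, deg G u := sum_eq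
    _ ≤ #(G.neighborFinset y) * d := sum_le_card_nsmul _ _ _ fun u _ => hdeg u
    _ ≤ d * d := Nat.mul_le_mul_right d (deg_eq_card_neighborFinset G y ▸ hdeg y)

lemma bad_le_sum_ncard_commonNeighbors [DecidableEq V] [DecidableEq K] (G : SimpleGraph V)
    (f : V → K) (y : V) :
    Bad G f y ≤ ∑ z with z ≠ y ∧ f z = f y, (G.commonNeighbors y z).ncard := by
  refine (Set.ncard_le_ncard ?_).trans (set_ncard_biUnion_le _ _)
  rintro u ⟨hyu, z, huz, hzy, hcolor⟩
  exact Set.mem_biUnion (by simpa using ⟨hzy, hcolor⟩) ⟨hyu, huz.symm⟩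

end CommonNeighbors

section GoodVertices

open Finset

variable {V K : Type*} [DecidableEq V]

variable (G : SimpleGraph V) (A : Finset V) (t : ℝ)

/-- The cost of the ordered pair `p = (y, z)` receiving a single colour. The summand `1 / 2` for
`z ∈ A` is charged again at `(z, y)`, so two equally coloured vertices of `A` pay at least `1`; the
summand `codegree / (2t)` makes the pairs at `y` pay at least `1 / 2` once `Bad(y)` exceeds `t`. -/
noncomputable def conflictWeight (p : V × V) : ℝ :=
  ((if p.2 ∈ A then 1 else 0) + (G.commonNeighbors p.1 p.2).ncard / t) / 2

/-- The vertices counted by `W` under the colouring `f`: uniquely coloured within `A`, which stands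
for `N_G(x)`, with `Bad` at most `t` and coloured from `S`, which stands for `N_𝒢(c₀)`. -/
noncomputable def goodVertices [DecidableEq K] (S : Finset K) (f : V → K) : Finset V :=
  {y ∈ A | (∀ y' ∈ A, f y' = f y → y' = y) ∧ (Bad G f y : ℝ) ≤ t ∧ f y ∈ S}

variable {G A t}

lemma mem_goodVertices [DecidableEq K] {S : Finset K} {f : V → K} {y : V} :
    y ∈ goodVertices G A t S f ↔
      y ∈ A ∧ (∀ y' ∈ A, f y' = f y → y' = y) ∧ (Bad G f y : ℝ) ≤ t ∧ f y ∈ S :=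
  mem_filter

variable (G A)

lemma conflictWeight_nonneg (ht : 0 < t) (p : V × V) : 0 ≤ conflictWeight G A t p := by
  unfold conflictWeight
  positivity

variable [Fintype V]

/-- The ordered pairs of distinct vertices, the first one in `A`, that can spoil the goodness of
their first vertex by receiving the same colour. -/
def conflictPairs (A : Finset V) : Finset (V × V) := {p ∈ A ×ˢ univ | p.1 ≠ p.2}

lemma mem_conflictPairs {A : Finset V} {p : V × V} :
    p ∈ conflictPairs A ↔ p.1 ∈ A ∧ p.1 ≠ p.2 := by
  simp [conflictPairs]

variable (t) in
/-- The total cost of the conflict pairs with both vertices coloured `c`. The condition ranges over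
`{p.1, p.2}` to match the requirement sets `P i` of `expect_prod_half_pow_add_sum_le`. -/
noncomputable def conflictSum [DecidableEq K] (f : V → K) (c : K) : ℝ :=
  ∑ p ∈ conflictPairs A with ∀ v ∈ ({p.1, p.2} : Finset V), f v = c, conflictWeight G A t p

lemma sum_conflictWeight_le (ht : 0 < t) {d : ℕ} (hdeg : ∀ v, deg G v ≤ d) (hA : #A ≤ d) :
    ∑ p ∈ conflictPairs A, conflictWeight G A t p ≤ #A * (d + d * d / t) / 2 := by
  have sum_row_le (y : V) : ∑ z, conflictWeight G A t (y, z) ≤ (d + d * d / t) / 2 := by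
    have codegree_le : ∑ z, ((G.commonNeighbors y z).ncard : ℝ) ≤ d * d :=
      mod_cast sum_ncard_commonNeighbors_le G hdeg y
    have hA' : (#A : ℝ) ≤ d := mod_cast hA
    simp only [conflictWeight, ← sum_div, sum_add_distrib, sum_boole, filter_univ_mem]
    gcongr
  calc ∑ p ∈ conflictPairs A, conflictWeight G A t p
      ≤ ∑ p ∈ A ×ˢ univ, conflictWeight G A t p :=
        sum_le_sum_of_subset_of_nonneg (filter_subset _ _)
          fun p _ _ => conflictWeight_nonneg G A ht p
    _ = ∑ y ∈ A, ∑ z, conflictWeight G A t (y, z) := sum_product ..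
    _ ≤ ∑ _y ∈ A, (d + d * d / t) / 2 := sum_le_sum fun y _ => sum_row_le y
    _ = #A * (d + d * d / t) / 2 := by rw [sum_const, nsmul_eq_mul, ← mul_div_assoc]

variable [DecidableEq K] {G A} {f : V → K} {c : K}

lemma conflictSum_nonneg (ht : 0 < t) : 0 ≤ conflictSum G A t f c :=
  sum_nonneg fun p _ => conflictWeight_nonneg G A ht p

lemma one_le_conflictSum_of_one_lt_card (ht : 0 < t) (h : 1 < #{v ∈ A | f v = c}) :
    1 ≤ conflictSum G A t f c := by
  obtain ⟨y, hy, z, hz, hyz⟩ := one_lt_card.1 h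
  rw [mem_filter] at hy hz
  have half_le_weight (y : V) {z : V} (hz : z ∈ A) : 1 / 2 ≤ conflictWeight G A t (y, z) := by
    rw [conflictWeight, if_pos hz]
    have : 0 ≤ ((G.commonNeighbors y z).ncard : ℝ) / t := by positivity
    linarith
  calc (1 : ℝ) ≤ conflictWeight G A t (y, z) + conflictWeight G A t (z, y) := by
        linarith [half_le_weight y hz.1, half_le_weight z hy.1]
    _ = ∑ p ∈ {(y, z), (z, y)}, conflictWeight G A t p :=
        (sum_pair fun h => hyz (congrArg Prod.fst h)).symm
    _ ≤ conflictSum G A t f c := by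
        refine sum_le_sum_of_subset_of_nonneg ?_ fun p _ _ => conflictWeight_nonneg G A ht p
        simp [insert_subset_iff, mem_conflictPairs, hy, hz, hyz, hyz.symm]

lemma half_le_conflictSum_of_lt_bad (ht : 0 < t) {y : V} (hyA : y ∈ A) (hyc : f y = c)
    (hbad : t < Bad G f y) : 1 / 2 ≤ conflictSum G A t f c := by
  let sameColor : Finset V := {z | z ≠ y ∧ f z = f y}
  have codegree_ge : t ≤ ∑ z ∈ sameColor, ((G.commonNeighbors y z).ncard : ℝ) :=
    hbad.le.trans (mod_cast bad_le_sum_ncard_commonNeighbors G f y)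
  calc 1 / 2 ≤ (∑ z ∈ sameColor, ((G.commonNeighbors y z).ncard : ℝ)) / t / 2 := by
        gcongr
        exact (one_le_div ht).2 codegree_ge
    _ = ∑ z ∈ sameColor, (G.commonNeighbors y z).ncard / t / 2 := by simp only [sum_div]
    _ ≤ ∑ z ∈ sameColor, conflictWeight G A t (y, z) := by
        refine sum_le_sum fun z _ => ?_
        rw [conflictWeight]
        gcongr
        exact le_add_of_nonneg_left (by positivity)
    _ = ∑ p ∈ sameColor.image (Prod.mk y), conflictWeight G A t p :=
        (sum_image (Prod.mk_right_injective y).injOn).symm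
    _ ≤ conflictSum G A t f c := by
        refine sum_le_sum_of_subset_of_nonneg ?_ fun p _ _ => conflictWeight_nonneg G A ht p
        simp +contextual [image_subset_iff, sameColor, mem_conflictPairs, hyA, hyc, eq_comm]

lemma half_pow_card_goodVertices_filter_le (ht : 0 < t) {S : Finset K} (hc : c ∈ S) :
    (1 / 2 : ℝ) ^ #{y ∈ goodVertices G A t S f | f y = c} ≤
      (1 / 2) ^ #{v ∈ A | f v = c} + conflictSum G A t f c := by
  have conflict_nonneg : 0 ≤ conflictSum G A t f c := conflictSum_nonneg ht
  have lhs_le_one : (1 / 2 : ℝ) ^ #{y ∈ goodVertices G A t S f | f y = c} ≤ 1 :=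
    pow_le_one₀ (by norm_num) (by norm_num)
  rcases Nat.lt_trichotomy #{v ∈ A | f v = c} 1 with class_empty | class_singleton | class_large
  · rw [Nat.lt_one_iff.1 class_empty, pow_zero]
    linarith
  · obtain ⟨y, hy⟩ := card_eq_one.1 class_singleton
    have mem_class (v : V) : v ∈ A ∧ f v = c ↔ v = y := by
      rw [← mem_filter (p := (f · = c)), hy, mem_singleton]
    obtain ⟨hyA, hyc⟩ := (mem_class y).2 rfl
    rw [class_singleton, pow_one]
    by_cases hbad : (Bad G f y : ℝ) ≤ t
    · have hgood : y ∈ goodVertices G A t S f := mem_goodVertices.2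
        ⟨hyA, fun v hv hvy => (mem_class v).1 ⟨hv, hvy.trans hyc⟩, hbad, hyc ▸ hc⟩
      have card_pos : #{y ∈ goodVertices G A t S f | f y = c} ≠ 0 :=
        card_ne_zero_of_mem (mem_filter.2 ⟨hgood, hyc⟩)
      linarith [pow_le_of_le_one (by norm_num : (0 : ℝ) ≤ 1 / 2) (by norm_num) card_pos]
    · linarith [half_le_conflictSum_of_lt_bad ht hyA hyc (not_le.1 hbad)]
  · have : (0 : ℝ) ≤ (1 / 2) ^ #{v ∈ A | f v = c} := by positivity
    linarith [one_le_conflictSum_of_one_lt_card (G := G) ht class_large]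

lemma half_pow_card_goodVertices_le (ht : 0 < t) (S : Finset K) :
    (1 / 2 : ℝ) ^ #(goodVertices G A t S f) ≤
      ∏ c ∈ S, ((1 / 2) ^ #{v ∈ A | f v = c} + conflictSum G A t f c) := by
  have color_mem (y : V) (hy : y ∈ goodVertices G A t S f) : f y ∈ S :=
    (mem_goodVertices.1 hy).2.2.2
  rw [card_eq_sum_card_fiberwise color_mem, ← prod_pow_eq_pow_sum]
  exact prod_le_prod (fun c _ => by positivity)
    fun c hc => half_pow_card_goodVertices_filter_le ht hc

end GoodVertices

section Concentration

open Finset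
open scoped BigOperators

lemma exp_neg_add_le_exp {a z : ℝ} (ha : a ≤ 1 / 2) (hz : 0 ≤ z) :
    Real.exp (-a) + z ≤ Real.exp (2 * z - a) := by
  have half_le : 1 / 2 ≤ Real.exp (-a) := by linarith [Real.add_one_le_exp (-a)]
  calc Real.exp (-a) + z ≤ (2 * z + 1) * Real.exp (-a) := by nlinarith
    _ ≤ Real.exp (2 * z) * Real.exp (-a) := by gcongr; exact Real.add_one_le_exp _
    _ = Real.exp (2 * z - a) := by rw [← Real.exp_add, sub_eq_add_neg]

lemma exp_add_conflict_le_exp {α d D N : ℝ} (hα : 10000 ≤ α) (hd : 0 < d) (hD : 0 ≤ D)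
    (hDd : D ≤ d) (hN : N = α * d) :
    Real.exp (-D / (2 * N)) + D * (d + d * d / (d / √α)) / 2 * (2 / N) ^ 2 ≤
      Real.exp (-(9 / 20 * (D / N))) := by
  have hα0 : 0 < α := by linarith
  have sqrt_ge : 100 ≤ √α := Real.le_sqrt_of_sq_le (by linarith)
  have sqrt_sq : √α * √α = α := Real.mul_self_sqrt hα0.le
  have hN0 : 0 < N := hN ▸ mul_pos hα0 hd
  have ratio_le : 4 * (1 + √α) / α ≤ 1 / 20 := by
    rw [div_le_div_iff₀ hα0 (by norm_num)]
    nlinarith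
  have conflict_eq : 2 * (D * (d + d * d / (d / √α)) / 2 * (2 / N) ^ 2) =
      D / N * (4 * (1 + √α) / α) := by
    rw [hN]
    field_simp
    ring
  have conflict_le : D / N * (4 * (1 + √α) / α) ≤ D / N * (1 / 20) := by gcongr
  have exponent_le_half : D / (2 * N) ≤ 1 / 2 := by
    rw [div_le_div_iff₀ (by positivity) (by norm_num), hN]
    nlinarith
  calc _ ≤ Real.exp (2 * (D * (d + d * d / (d / √α)) / 2 * (2 / N) ^ 2) - D / (2 * N)) := by
        rw [neg_div]
        exact exp_neg_add_le_exp exponent_le_half (by positivity)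
    _ ≤ Real.exp (-(9 / 20 * (D / N))) := by
        refine Real.exp_le_exp.2 ?_
        rw [conflict_eq, div_mul_eq_div_div_swap]
        linarith

variable {V K : Type*} [DecidableEq V] [Fintype K] [DecidableEq K] [Nonempty K]
  (G : SimpleGraph V) (A : Finset V) (S : Finset K) {d : ℕ}

lemma expect_half_pow_card_goodVertices_le [Fintype V] {t : ℝ} (ht : 0 < t)
    (hdeg : ∀ v, deg G v ≤ d) (hA : #A ≤ d) :
    𝔼 f : V → K, (1 / 2 : ℝ) ^ #(goodVertices G A t S f) ≤
      (Real.exp (-#A / (2 * Fintype.card K)) +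
        #A * (d + d * d / t) / 2 * (2 / Fintype.card K) ^ 2) ^ #S := by
  calc 𝔼 f : V → K, (1 / 2 : ℝ) ^ #(goodVertices G A t S f)
      ≤ 𝔼 f : V → K, ∏ c ∈ S, ((1 / 2 : ℝ) ^ #{v ∈ A | f v = c} + conflictSum G A t f c) :=
        expect_le_expect fun f _ => half_pow_card_goodVertices_le ht S
    _ ≤ (Real.exp (-#A / (2 * Fintype.card K)) + ∑ p ∈ conflictPairs A,
          conflictWeight G A t p * (2 / Fintype.card K) ^ #({p.1, p.2} : Finset V)) ^ #S :=
        expect_prod_half_pow_add_sum_le A (conflictPairs A) (fun p => {p.1, p.2})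
          (fun p _ => conflictWeight_nonneg G A ht p) S
    _ = (Real.exp (-#A / (2 * Fintype.card K)) +
          (∑ p ∈ conflictPairs A, conflictWeight G A t p) * (2 / Fintype.card K) ^ 2) ^ #S := by
        rw [sum_mul]
        congr 2
        refine sum_congr rfl fun p hp => ?_
        rw [card_pair (mem_conflictPairs.1 hp).2]
    _ ≤ _ := by
        have := sum_nonneg fun p (_ : p ∈ conflictPairs A) => conflictWeight_nonneg G A ht p
        gcongr
        exact sum_conflictWeight_le G A ht hdeg hA

theorem ncard_card_goodVertices_le_div_card_le [Finite V] {α p : ℝ} (hα : 10000 ≤ α)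
    (hK : Fintype.card K = α * d) (hdeg : ∀ v, deg G v ≤ d) (hA : #A ≤ d)
    (hp : p * Fintype.card K ≤ #S) :
    ({f : V → K | (#(goodVertices G A (d / √α) S f) : ℝ) ≤ p * #A / 2}.ncard : ℝ) /
      Nat.card (V → K) ≤ Real.exp (-(p * #A / 10)) := by
  cases nonempty_fintype V
  have hK0 : (0 : ℝ) < Fintype.card K := mod_cast Fintype.card_pos
  have hd : (0 : ℝ) < d := pos_of_mul_pos_right (hK ▸ hK0) (by linarith)
  have mean_ge : p * #A ≤ #S * (#A / Fintype.card K) := by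
    rw [mul_div_left_comm, mul_comm p]
    gcongr
    rwa [le_div_iff₀ hK0]
  have log_two_le : Real.log 2 ≤ 7 / 10 := by linarith [Real.log_two_lt_d9]
  calc _ ≤ 2 ^ (p * #A / 2) * 𝔼 f : V → K, (1 / 2 : ℝ) ^ #(goodVertices G A (d / √α) S f) :=
        ncard_setOf_le_div_card_le _ _
    _ ≤ 2 ^ (p * #A / 2) * Real.exp (-(9 / 20 * (#A / Fintype.card K))) ^ #S := by
        gcongr
        refine (expect_half_pow_card_goodVertices_le G A S (by positivity) hdeg hA).trans ?_
        gcongr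
        exact exp_add_conflict_le_exp hα hd (by positivity) (mod_cast hA) hK
    _ = Real.exp (Real.log 2 * (p * #A / 2) - 9 / 20 * (#S * (#A / Fintype.card K))) := by
        rw [Real.rpow_def_of_pos two_pos, ← Real.exp_nat_mul, ← Real.exp_add]
        ring_nf
    _ ≤ Real.exp (-(p * #A / 10)) := by
        refine Real.exp_le_exp.2 ?_
        have : 0 ≤ (#S : ℝ) * (#A / Fintype.card K) := by positivity
        nlinarith [Real.log_pos one_lt_two]

end Concentration

lemma minDeg_le_deg {β : Type*} [Fintype β] (H : SimpleGraph β) (v : β) : minDeg H ≤ deg H v :=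
  ciInf_le (OrderBot.bddBelow _) v

lemma neg_density_mul_div_ten_le {α δ d D : ℝ} (hα : 0 ≤ α) (hδ : 0 ≤ δ) (hd : 0 < d)
    (hD : d ≤ 2 * D) :
    -(δ / (α * d) * D / 10) ≤ -(1 / (20 * α)) * δ := by
  have half_le : 1 / 2 ≤ D / d := by
    rw [le_div_iff₀ hd]
    linarith
  calc -(δ / (α * d) * D / 10) = -(δ / (10 * α) * (D / d)) := by ring
    _ ≤ -(δ / (10 * α) * (1 / 2)) :=
        neg_le_neg (mul_le_mul_of_nonneg_left half_le (by positivity))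
    _ = -(1 / (20 * α)) * δ := by ring

theorem statement2_general {V K : Type*} [Finite V] [Fintype K] (G : SimpleGraph V)
    (𝒢 : SimpleGraph K) {α : ℝ} {d : ℕ} (hα : 10000 ≤ α) (hK : Fintype.card K = α * d)
    (hdeg : ∀ v, deg G v ≤ d) (x : V) (c₀ : K) :
    (Set.ncard {f : V → K |
        (Set.ncard {y | y ∈ G.neighborSet x ∧
            (∀ y' ∈ G.neighborSet x, f y' = f y → y' = y) ∧
            (Bad G f y : ℝ) ≤ (d : ℝ) / Real.sqrt α ∧
            𝒢.Adj c₀ (f y)} : ℝ) ≤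
          (minDeg 𝒢 : ℝ) / (α * (d : ℝ)) * (deg G x : ℝ) / 2} : ℝ) /
      (Nat.card (V → K) : ℝ) ≤
    Real.exp (-((minDeg 𝒢 : ℝ) / (α * (d : ℝ)) * (deg G x : ℝ) / 10)) := by
  classical
  cases nonempty_fintype V
  have : Nonempty K := ⟨c₀⟩
  have density_le : (minDeg 𝒢 : ℝ) / (α * d) * Fintype.card K ≤ (𝒢.neighborFinset c₀).card := by
    rw [hK, div_mul_cancel₀ _ (hK ▸ mod_cast Fintype.card_ne_zero),
      ← deg_eq_card_neighborFinset]
    exact mod_cast minDeg_le_deg 𝒢 c₀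
  have good_eq (f : V → K) :
      {y | y ∈ G.neighborSet x ∧ (∀ y' ∈ G.neighborSet x, f y' = f y → y' = y) ∧
        (Bad G f y : ℝ) ≤ d / Real.sqrt α ∧ 𝒢.Adj c₀ (f y)} =
      goodVertices G (G.neighborFinset x) (d / Real.sqrt α) (𝒢.neighborFinset c₀) f := by
    ext y
    simp [mem_goodVertices]
  simp only [good_eq, Set.ncard_coe_finset, deg_eq_card_neighborFinset]
  exact ncard_card_goodVertices_le_div_card_le G _ _ hα hK hdeg
    (deg_eq_card_neighborFinset G x ▸ hdeg x) density_le

theorem statement2 :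
    ∃ α₀ : ℕ, 1 ≤ α₀ ∧
      ∀ α : ℕ, α₀ ≤ α →
        ∃ (c : ℝ) (d₀ : ℕ), 0 < c ∧
          ∀ d : ℕ, d₀ ≤ d →
            ∀ (V : Type) [Fintype V] (G : SimpleGraph V) (X Y : Set V),
              Disjoint X Y → X ∪ Y = Set.univ →
              (∀ u v : V, G.Adj u v → (u ∈ X ∧ v ∈ Y) ∨ (u ∈ Y ∧ v ∈ X)) →
              (∀ v : V, deg G v ≤ d) →
              ∀ (𝒢 : SimpleGraph (Fin (α * d))) (x : V) (c₀ : Fin (α * d)),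
                x ∈ X → d ≤ 2 * deg G x →
                (Set.ncard {f : V → Fin (α * d) |
                    (Set.ncard {y | y ∈ G.neighborSet x ∧
                        (∀ y' ∈ G.neighborSet x, f y' = f y → y' = y) ∧
                        (Bad G f y : ℝ) ≤ (d : ℝ) / Real.sqrt (α : ℝ) ∧
                        𝒢.Adj c₀ (f y)} : ℝ) ≤
                      (minDeg 𝒢 : ℝ) / ((α : ℝ) * (d : ℝ)) * (deg G x : ℝ) / 2} : ℝ) /
                  (Nat.card (V → Fin (α * d)) : ℝ) ≤
                Real.exp (-c * (minDeg 𝒢 : ℝ)) := by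
  refine ⟨10000, by norm_num, fun α hα => ⟨1 / (20 * α), 1, by positivity, ?_⟩⟩
  intro d hd V _ G _ _ _ _ _ hdeg 𝒢 x c₀ _ hx
  exact (statement2_general G 𝒢 (mod_cast hα) (by simp) hdeg x c₀).trans <|
    Real.exp_le_exp.2 <| neg_density_mul_div_ten_le (by positivity) (by positivity)
      (mod_cast hd) (mod_cast hx)
end

section
/- Fix ε > 0. There exist α₀ ≥ 1 and, for every α ≥ α₀, an integer d₀ such that the following holds for all d ≥ d₀. Let G be a d-regular bipartite graph with parts A and B and let 𝒢 be a graph on α·d vertices with minimum degree δ(𝒢) > d^ε. Then there exist a coloring χ : A → V(𝒢) and a spanning subgraph H ⊆ G such that: (P1) every a ∈ A satisfies d_H(a) ≥ d/2; (P2) for every b ∈ B, the restriction of χ to N_H(b) is injective (the neighborhood of b is rainbow); and (P3) for every b ∈ B and every c ∈ V(𝒢), there are at least δ(𝒢)/(2α) vertices a ∈ N_H(b) with χ(a)c ∈ E(𝒢). -/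
open SimpleGraph

/-!
Color the vertices uniformly at random and call a vertex `a` crowded if more than half of its
neighbors `u` see the color of `a` a second time. For fixed `b` and `c`, the colors of `N(c)` that
are missing on `N(b)`, and those shown by a crowded vertex of `N(b)`, have exponential tails in the
size of `N(c)`. Since `b` is affected only by the colors within distance three, the local lemma
yields a coloring in which every `N(b)` shows at least a fraction `3 / (4α)` of each `N(c)`, of
which at most `1 / (4α)` is shown by crowded vertices.

Now recolor the crowded vertices so as to minimize the number of monochromatic pairs weighted by
codegree; by averaging over the `αd` colors, at most half of the edges at a recolored vertex go to a
neighbor that sees its color twice. Finally `H` keeps one vertex of each color in `N(b)`, uncrowded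
if possible. Then an uncrowded vertex loses an edge only to an uncrowded vertex of its original
color, so no vertex of `A` loses more than half of its edges.
-/

open Finset MeasureTheory ProbabilityTheory

section LocalLemma

variable {Ω ι : Type*} [MeasurableSpace Ω] {μ : Measure Ω} {E : ι → Set Ω}
  {Γ : ι → Finset ι} {p : ℝ} {Δ : ℕ}

-- The induction behind the lopsided Lovász local lemma, with the conditional probabilities
-- multiplied out so that no conditioning event has to be known to have positive measure.
theorem measureReal_diff_biUnion_le [IsFiniteMeasure μ] (hp : 0 ≤ p)
    (hΔ : ∀ i, #(Γ i) ≤ Δ) (hpΔ : 4 * p * Δ ≤ 1)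
    (hE : ∀ i (S : Finset ι), Disjoint S (Γ i) →
      μ.real (E i \ ⋃ j ∈ S, E j) ≤ p * μ.real (⋃ j ∈ S, E j)ᶜ)
    (S : Finset ι) (i : ι) :
    μ.real (E i \ ⋃ j ∈ S, E j) ≤ 2 * p * μ.real (⋃ j ∈ S, E j)ᶜ := by
  classical
  induction S using Finset.strongInduction generalizing i with
  | H S ih =>
  set T := S \ Γ i
  have hTS : ⋃ j ∈ T, E j ⊆ ⋃ j ∈ S, E j := Set.biUnion_subset_biUnion_left sdiff_subset
  have hcover : (⋃ j ∈ T, E j)ᶜ ⊆ (⋃ j ∈ S, E j)ᶜ ∪ ⋃ j ∈ S ∩ Γ i, E j \ ⋃ k ∈ T, E k := by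
    intro ω hω
    simp only [T, Set.mem_compl_iff, Set.mem_iUnion, Set.mem_union, Set.mem_sdiff, mem_inter,
      mem_sdiff] at hω ⊢
    grind
  have hnear : ∀ j ∈ S ∩ Γ i,
      μ.real (E j \ ⋃ k ∈ T, E k) ≤ 2 * p * μ.real (⋃ k ∈ T, E k)ᶜ := by
    intro j hj
    have hjS := mem_inter.1 hj
    exact ih T (sdiff_subset.ssubset_of_mem_notMem hjS.1 fun h => (mem_sdiff.1 h).2 hjS.2) j
  have hcard : (#(S ∩ Γ i) : ℝ) ≤ Δ := by
    exact_mod_cast (card_le_card inter_subset_right).trans (hΔ i)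
  have hhalf : μ.real (⋃ j ∈ T, E j)ᶜ ≤
      μ.real (⋃ j ∈ S, E j)ᶜ + μ.real (⋃ j ∈ T, E j)ᶜ / 2 := calc
    μ.real (⋃ j ∈ T, E j)ᶜ
    _ ≤ μ.real (⋃ j ∈ S, E j)ᶜ + ∑ j ∈ S ∩ Γ i, μ.real (E j \ ⋃ k ∈ T, E k) :=
      (measureReal_mono hcover).trans <| (measureReal_union_le _ _).trans <|
        add_le_add_right (measureReal_biUnion_finset_le _ _) _
    _ ≤ μ.real (⋃ j ∈ S, E j)ᶜ + #(S ∩ Γ i) * (2 * p * μ.real (⋃ j ∈ T, E j)ᶜ) := by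
      gcongr
      exact (sum_le_card_nsmul _ _ _ hnear).trans_eq (nsmul_eq_mul _ _)
    _ ≤ μ.real (⋃ j ∈ S, E j)ᶜ + Δ * (2 * p * μ.real (⋃ j ∈ T, E j)ᶜ) := by gcongr
    _ ≤ μ.real (⋃ j ∈ S, E j)ᶜ + μ.real (⋃ j ∈ T, E j)ᶜ / 2 := by
      have := mul_le_mul_of_nonneg_right hpΔ (measureReal_nonneg (μ := μ) (s := (⋃ j ∈ T, E j)ᶜ))
      linarith
  calc μ.real (E i \ ⋃ j ∈ S, E j)
    _ ≤ μ.real (E i \ ⋃ j ∈ T, E j) := measureReal_mono (Set.sdiff_subset_sdiff_right hTS)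
    _ ≤ p * μ.real (⋃ j ∈ T, E j)ᶜ := hE i T sdiff_disjoint
    _ ≤ p * (2 * μ.real (⋃ j ∈ S, E j)ᶜ) := by gcongr; linarith
    _ = 2 * p * μ.real (⋃ j ∈ S, E j)ᶜ := by ring

theorem measureReal_compl_biUnion_pos [IsProbabilityMeasure μ] (hp : 0 ≤ p)
    (hΔ : ∀ i, #(Γ i) ≤ Δ) (hΔ0 : 0 < Δ) (hpΔ : 4 * p * Δ ≤ 1)
    (hE : ∀ i (S : Finset ι), Disjoint S (Γ i) →
      μ.real (E i \ ⋃ j ∈ S, E j) ≤ p * μ.real (⋃ j ∈ S, E j)ᶜ)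
    (S : Finset ι) :
    0 < μ.real (⋃ j ∈ S, E j)ᶜ := by
  classical
  have hp4 : 4 * p ≤ 1 := by
    have : (1 : ℝ) ≤ Δ := by exact_mod_cast hΔ0
    nlinarith
  induction S using Finset.induction_on with
  | empty => simp
  | insert i S _ ih =>
    have hsplit : (⋃ j ∈ S, E j)ᶜ ⊆ (⋃ j ∈ insert i S, E j)ᶜ ∪ (E i \ ⋃ j ∈ S, E j) := by
      intro ω hω
      simp only [set_biUnion_insert, Set.mem_union, Set.mem_compl_iff, Set.mem_sdiff] at hω ⊢
      tauto
    have hle := (measureReal_mono (μ := μ) hsplit).trans (measureReal_union_le _ _)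
    have hi := measureReal_diff_biUnion_le hp hΔ hpΔ hE S i
    nlinarith

end LocalLemma

section ProductSpace

variable {V ι : Type*} {X : V → Type*} [∀ v, MeasurableSpace (X v)]

theorem exists_measurableSet_preimage_restrict_eq {A : Set (∀ v, X v)} {S : Finset V}
    (hA : MeasurableSet A) (hAS : DependsOn (· ∈ A) (S : Set V)) :
    ∃ A' : Set (∀ v : S, X v), MeasurableSet A' ∧ S.restrict ⁻¹' A' = A := by
  classical
  rcases A.eq_empty_or_nonempty with rfl | ⟨x₀, -⟩
  · exact ⟨∅, MeasurableSet.empty, rfl⟩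
  · refine ⟨Function.updateFinset x₀ S ⁻¹' A, measurable_updateFinset hA, ?_⟩
    ext x
    refine iff_of_eq (hAS fun v hv => ?_)
    simp only [mem_coe] at hv
    simp [Function.updateFinset, hv]

variable [Fintype V] (μ : ∀ v, Measure (X v)) [∀ v, IsProbabilityMeasure (μ v)]

theorem pi_real_inter_of_dependsOn {A B : Set (∀ v, X v)} {S T : Finset V} (hST : Disjoint S T)
    (hA : MeasurableSet A) (hAS : DependsOn (· ∈ A) (S : Set V))
    (hB : MeasurableSet B) (hBT : DependsOn (· ∈ B) (T : Set V)) :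
    (Measure.pi μ).real (A ∩ B) = (Measure.pi μ).real A * (Measure.pi μ).real B := by
  obtain ⟨A', hA', rfl⟩ := exists_measurableSet_preimage_restrict_eq hA hAS
  obtain ⟨B', hB', rfl⟩ := exists_measurableSet_preimage_restrict_eq hB hBT
  have hcoord : iIndepFun (fun v (x : ∀ v, X v) => x v) (Measure.pi μ) :=
    iIndepFun_pi (X := fun _ => id) fun _ => aemeasurable_id
  have hind : IndepFun S.restrict T.restrict (Measure.pi μ) :=
    hcoord.indepFun_finset S T hST measurable_pi_apply
  simp only [measureReal_def, ← ENNReal.toReal_mul, hind.measure_inter_preimage_eq_mul _ _ hA' hB']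

theorem exists_forall_notMem_of_dependsOn [Finite ι] {E : ι → Set (∀ v, X v)}
    (hE : ∀ i, MeasurableSet (E i)) {S : ι → Finset V}
    (hES : ∀ i, DependsOn (· ∈ E i) (S i : Set V)) {p : ℝ} (hp : 0 ≤ p)
    (hEp : ∀ i, (Measure.pi μ).real (E i) ≤ p) {Γ : ι → Finset ι}
    (hΓ : ∀ i, ∀ j ∉ Γ i, Disjoint (S i) (S j)) {Δ : ℕ} (hΔ : ∀ i, #(Γ i) ≤ Δ) (hΔ0 : 0 < Δ)
    (hpΔ : 4 * p * Δ ≤ 1) :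
    ∃ x, ∀ i, x ∉ E i := by
  classical
  have := Fintype.ofFinite ι
  have hlopsided : ∀ i (T : Finset ι), Disjoint T (Γ i) → (Measure.pi μ).real (E i \ ⋃ j ∈ T, E j)
      ≤ p * (Measure.pi μ).real (⋃ j ∈ T, E j)ᶜ := by
    intro i T hT
    have hmeas : MeasurableSet (⋃ j ∈ T, E j)ᶜ :=
      (Finset.measurableSet_biUnion T fun j _ => hE j).compl
    have hdep : DependsOn (· ∈ (⋃ j ∈ T, E j)ᶜ) (((S i)ᶜ : Finset V) : Set V) := by
      intro x y hxy
      have hiff : ∀ j ∈ T, (x ∈ E j ↔ y ∈ E j) := fun j hj =>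
        iff_of_eq (hES j fun v hv => hxy v <| mem_coe.2 <| mem_compl.2 <|
          disjoint_right.1 (hΓ i j (disjoint_left.1 hT hj)) hv)
      simp +contextual [hiff]
    rw [Set.sdiff_eq, pi_real_inter_of_dependsOn μ disjoint_compl_right (hE i) (hES i) hmeas hdep]
    gcongr
    exact hEp i
  have hpos := measureReal_compl_biUnion_pos hp hΔ hΔ0 hpΔ hlopsided univ
  obtain ⟨x, hx⟩ := nonempty_of_measureReal_ne_zero hpos.ne'
  exact ⟨x, by simpa using hx⟩

theorem pi_real_forall_mem (K : Finset V) {T : ∀ v, Set (X v)}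
    (hT : ∀ v ∈ K, MeasurableSet (T v)) :
    (Measure.pi μ).real {x | ∀ v ∈ K, x v ∈ T v} = ∏ v ∈ K, (μ v).real (T v) := by
  have : {x : ∀ v, X v | ∀ v ∈ K, x v ∈ T v} = Set.pi K T := by ext; simp [Set.mem_pi]
  rw [this, ← Measure.infinitePi_eq_pi, measureReal_def, Measure.infinitePi_pi _ hT,
    ENNReal.toReal_prod]
  rfl

end ProductSpace

section Chernoff

variable {Ω ι : Type*}

theorem exp_mul_card_eq_sum_indicator (E : ι → Set Ω) [∀ ω, DecidablePred (ω ∈ E ·)]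
    (D : Finset ι) (s : ℝ) (ω : Ω) :
    Real.exp (s * #{c ∈ D | ω ∈ E c}) =
      ∑ U ∈ D.powerset, (Real.exp s - 1) ^ #U * (⋂ c ∈ U, E c).indicator 1 ω := by
  classical
  calc Real.exp (s * #{c ∈ D | ω ∈ E c})
    _ = ∏ c ∈ D, (1 + if ω ∈ E c then Real.exp s - 1 else 0) := by
      rw [mul_comm, Real.exp_nat_mul, ← prod_const, prod_filter]
      exact prod_congr rfl fun c _ => by split_ifs <;> simp
    _ = ∑ U ∈ D.powerset, (Real.exp s - 1) ^ #U * (⋂ c ∈ U, E c).indicator 1 ω := by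
      rw [prod_one_add]
      refine sum_congr rfl fun U _ => ?_
      rw [prod_ite_zero, prod_const]
      simp [Set.indicator_apply]

variable [MeasurableSpace Ω] {μ : Measure Ω} [IsProbabilityMeasure μ]
  {E : ι → Set Ω} [∀ ω, DecidablePred (ω ∈ E ·)] {D : Finset ι} {q : ℝ}

-- Expanding `exp (s X)` over the subsets of `D` shows that Chernoff bounds need no independence:
-- product upper bounds on the probabilities of the intersections suffice.
theorem mgf_card_le (hE : ∀ c ∈ D, MeasurableSet (E c))
    (hq : ∀ U ⊆ D, μ.real (⋂ c ∈ U, E c) ≤ q ^ #U) {s : ℝ} (hs : 0 ≤ s) :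
    Integrable (fun ω => Real.exp (s * #{c ∈ D | ω ∈ E c})) μ ∧
      mgf (fun ω => (#{c ∈ D | ω ∈ E c} : ℝ)) μ s ≤ (1 + (Real.exp s - 1) * q) ^ #D := by
  have hmeas : ∀ U ∈ D.powerset, MeasurableSet (⋂ c ∈ U, E c) := fun U hU =>
    Finset.measurableSet_biInter U fun c hc => hE c (mem_powerset.1 hU hc)
  have hint : ∀ U ∈ D.powerset,
      Integrable (fun ω => (Real.exp s - 1) ^ #U * (⋂ c ∈ U, E c).indicator 1 ω) μ :=
    fun U hU => ((integrable_const 1).indicator (hmeas U hU)).const_mul _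
  have hexp : 0 ≤ Real.exp s - 1 := sub_nonneg.2 (Real.one_le_exp hs)
  simp only [mgf, exp_mul_card_eq_sum_indicator]
  refine ⟨integrable_finsetSum _ hint, ?_⟩
  calc ∫ ω, ∑ U ∈ D.powerset, (Real.exp s - 1) ^ #U * (⋂ c ∈ U, E c).indicator 1 ω ∂μ
    _ = ∑ U ∈ D.powerset, (Real.exp s - 1) ^ #U * μ.real (⋂ c ∈ U, E c) := by
      rw [integral_finsetSum _ hint]
      refine sum_congr rfl fun U hU => ?_
      rw [integral_const_mul, integral_indicator_one (hmeas U hU)]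
    _ ≤ ∑ U ∈ D.powerset, (Real.exp s - 1) ^ #U * q ^ #U := by
      gcongr with U hU
      exact hq U (mem_powerset.1 hU)
    _ = (1 + (Real.exp s - 1) * q) ^ #D := by
      simp_rw [← mul_pow, ← prod_const, prod_one_add]

theorem measureReal_mul_card_le_card_le (hE : ∀ c ∈ D, MeasurableSet (E c))
    (hq : ∀ U ⊆ D, μ.real (⋂ c ∈ U, E c) ≤ q ^ #U) {s : ℝ} (hs : 0 ≤ s) (t : ℝ) :
    μ.real {ω | t * #D ≤ #{c ∈ D | ω ∈ E c}} ≤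
      (Real.exp (-s * t) * (1 + (Real.exp s - 1) * q)) ^ #D := by
  obtain ⟨hint, hmgf⟩ := mgf_card_le hE hq hs
  calc μ.real {ω | t * #D ≤ #{c ∈ D | ω ∈ E c}}
    _ ≤ Real.exp (-s * (t * #D)) * mgf (fun ω => (#{c ∈ D | ω ∈ E c} : ℝ)) μ s :=
      measure_ge_le_exp_mul_mgf _ hs hint
    _ ≤ Real.exp (-s * (t * #D)) * (1 + (Real.exp s - 1) * q) ^ #D := by gcongr
    _ = (Real.exp (-s * t) * (1 + (Real.exp s - 1) * q)) ^ #D := by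
      rw [mul_pow, ← Real.exp_nat_mul]
      ring_nf

end Chernoff

section UniformColoring

variable {V C : Type*} [Fintype V] [Fintype C] [MeasurableSpace C]

variable (V C) in
/-- The law of a coloring `V → C` whose values are independent and uniform on the finite type
`C`. -/
noncomputable abbrev uniformColoring : Measure (V → C) :=
  Measure.pi fun _ => uniformOn Set.univ

variable [MeasurableSingletonClass C]

theorem uniformOn_univ_real_coe (U : Finset C) :
    (uniformOn (Set.univ : Set C)).real U = #U / Fintype.card C := by
  simp [measureReal_def, uniformOn_univ]

variable [Nonempty C]

theorem uniformColoring_real_forall_ne_le (K : Finset V) (U : Finset C) :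
    (uniformColoring V C).real (⋂ c ∈ U, {f | ∀ a ∈ K, f a ≠ c}) ≤
      Real.exp (-(#K / Fintype.card C)) ^ #U := by
  classical
  have hset : (⋂ c ∈ U, {f : V → C | ∀ a ∈ K, f a ≠ c}) =
      {f | ∀ a ∈ K, f a ∈ ((Uᶜ : Finset C) : Set C)} := by
    ext f
    simp only [Set.mem_iInter, Set.mem_ofPred_eq, coe_compl, Set.mem_compl_iff, mem_coe]
    grind
  have hcompl : (#Uᶜ / Fintype.card C : ℝ) = 1 - #U / Fintype.card C := by
    rw [card_compl, Nat.cast_sub (card_le_univ U), sub_div, div_self (by simp)]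
  rw [hset, pi_real_forall_mem _ _ fun _ _ => Finset.measurableSet _]
  calc ∏ _a ∈ K, (uniformOn (Set.univ : Set C)).real ((Uᶜ : Finset C) : Set C)
    _ = (1 - #U / Fintype.card C) ^ #K := by rw [prod_const, uniformOn_univ_real_coe, hcompl]
    _ ≤ Real.exp (-(#U / Fintype.card C)) ^ #K := by
      gcongr
      · exact hcompl ▸ by positivity
      · exact Real.one_sub_le_exp_neg _
    _ = Real.exp (-(#K / Fintype.card C)) ^ #U := by
      rw [← Real.exp_nat_mul, ← Real.exp_nat_mul]
      ring_nf

theorem uniformColoring_real_forall_eq_le {ι : Type*} [Fintype ι] {x : ι → V} {y : ι → C}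
    (hxy : Function.Injective fun i => (x i, y i)) :
    (uniformColoring V C).real {f | ∀ i, f (x i) = y i} ≤
      (1 / Fintype.card C) ^ Fintype.card ι := by
  classical
  rcases Set.eq_empty_or_nonempty {f : V → C | ∀ i, f (x i) = y i} with hempty | ⟨g, hg⟩
  · rw [hempty, measureReal_empty]
    positivity
  have hx : Function.Injective x := fun i j hij =>
    hxy (Prod.ext hij ((hg i).symm.trans ((congrArg g hij).trans (hg j))))
  have hset : {f : V → C | ∀ i, f (x i) = y i} =
      {f | ∀ v ∈ univ.image x, f v ∈ (({g v} : Finset C) : Set C)} := by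
    ext f
    simp [← hg _]
  rw [hset, pi_real_forall_mem _ _ fun _ _ => Finset.measurableSet _]
  simp only [uniformOn_univ_real_coe, card_singleton, Nat.cast_one, prod_const,
    card_image_of_injective _ hx, card_univ, le_refl]

theorem uniformColoring_real_forall_pair_le {U : Finset C} {e : U → V × V}
    (he : ∀ c, (e c).1 ≠ (e c).2) :
    (uniformColoring V C).real {f | ∀ c, f (e c).1 = c ∧ f (e c).2 = c} ≤
      (1 / (Fintype.card C : ℝ) ^ 2) ^ #U := by
  let x : U × Bool → V := fun i => bif i.2 then (e i.1).1 else (e i.1).2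
  have hxy : Function.Injective fun i : U × Bool => (x i, (i.1 : C)) := by
    rintro ⟨c, s⟩ ⟨c', s'⟩ h
    obtain ⟨hx, hc⟩ := Prod.mk.inj h
    obtain rfl : c = c' := Subtype.ext hc
    cases s <;> cases s' <;> simp_all [x, eq_comm]
  have hset : {f : V → C | ∀ c, f (e c).1 = c ∧ f (e c).2 = c} = {f | ∀ i, f (x i) = i.1} := by
    ext f
    simp [x, and_comm]
  calc (uniformColoring V C).real {f | ∀ c, f (e c).1 = c ∧ f (e c).2 = c}
    _ ≤ (1 / (Fintype.card C : ℝ)) ^ Fintype.card (U × Bool) :=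
      hset ▸ uniformColoring_real_forall_eq_le hxy
    _ = (1 / (Fintype.card C : ℝ) ^ 2) ^ #U := by
      rw [Fintype.card_prod, Fintype.card_bool, Fintype.card_coe, mul_comm, pow_mul, one_div_pow]

theorem prod_mul_uniformColoring_real_forall_pair_le {w : V × V → ℝ} (hw : 0 ≤ w)
    (hdiag : ∀ v, w (v, v) = 0) {U : Finset C} (e : U → V × V) :
    (∏ c, w (e c)) * (uniformColoring V C).real {f | ∀ c, f (e c).1 = c ∧ f (e c).2 = c} ≤
      (∏ c, w (e c)) * (1 / (Fintype.card C : ℝ) ^ 2) ^ #U := by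
  by_cases he : ∀ c, (e c).1 ≠ (e c).2
  · exact mul_le_mul_of_nonneg_left (uniformColoring_real_forall_pair_le he)
      (prod_nonneg fun c _ => hw (e c))
  · push Not at he
    obtain ⟨c, hc⟩ := he
    have hzero : w (e c) = 0 := by
      rw [← Prod.mk.eta (p := e c), ← hc, hdiag]
    have hprod : ∏ c, w (e c) = 0 := prod_eq_zero (mem_univ c) hzero
    rw [hprod, zero_mul, zero_mul]

-- If each of the sums is at least `1`, then so is their product over `c ∈ U`. Each term of the
-- expanded product prescribes the color of two vertices for every `c ∈ U`; unless it vanishes by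
-- `hdiag` or its prescriptions conflict, they concern `2 * #U` distinct vertices.
theorem uniformColoring_real_one_le_sum_pair_le [DecidableEq C] {w : V × V → ℝ} (hw : 0 ≤ w)
    (hdiag : ∀ v, w (v, v) = 0) (U : Finset C) :
    (uniformColoring V C).real
        (⋂ c ∈ U, {f | 1 ≤ ∑ e, if f e.1 = c ∧ f e.2 = c then w e else 0}) ≤
      ((∑ e, w e) / (Fintype.card C : ℝ) ^ 2) ^ #U := by
  classical
  set heavy : Set (V → C) := ⋂ c ∈ U, {f | 1 ≤ ∑ e, if f e.1 = c ∧ f e.2 = c then w e else 0}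
  let hit (e : U → V × V) : Set (V → C) := {f | ∀ c, f (e c).1 = c ∧ f (e c).2 = c}
  have hmeas (A : Set (V → C)) : MeasurableSet A := A.toFinite.measurableSet
  have hexpand (f : V → C) :
      heavy.indicator 1 f ≤ ∑ e : U → V × V, (∏ c, w (e c)) * (hit e).indicator 1 f := by
    have hsum_prod : ∑ e : U → V × V, (∏ c, w (e c)) * (hit e).indicator 1 f =
        ∏ c : U, ∑ e, if f e.1 = c ∧ f e.2 = c then w e else 0 := by
      rw [prod_univ_sum, Fintype.piFinset_univ]
      refine sum_congr rfl fun e _ => ?_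
      simp [prod_ite_zero, hit, Set.indicator_apply]
    rw [hsum_prod]
    by_cases hf : f ∈ heavy
    · rw [Set.indicator_of_mem hf]
      exact Finset.one_le_prod fun c _ => Set.mem_iInter₂.1 hf c c.2
    · rw [Set.indicator_of_notMem hf]
      exact prod_nonneg fun c _ => sum_nonneg fun e _ => ite_nonneg (hw e) le_rfl
  calc (uniformColoring V C).real heavy
    _ = ∫ f, heavy.indicator 1 f ∂uniformColoring V C := (integral_indicator_one (hmeas _)).symm
    _ ≤ ∫ f, ∑ e : U → V × V, (∏ c, w (e c)) * (hit e).indicator 1 f ∂uniformColoring V C :=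
      integral_mono .of_finite .of_finite hexpand
    _ = ∑ e : U → V × V, (∏ c, w (e c)) * (uniformColoring V C).real (hit e) := by
      rw [integral_finsetSum _ fun _ _ => .of_finite]
      simp_rw [integral_const_mul, integral_indicator_one (hmeas _)]
    _ ≤ ∑ e : U → V × V, (∏ c, w (e c)) * (1 / (Fintype.card C : ℝ) ^ 2) ^ #U :=
      sum_le_sum fun e _ => prod_mul_uniformColoring_real_forall_pair_le hw hdiag e
    _ = ((∑ e, w e) / (Fintype.card C : ℝ) ^ 2) ^ #U := by
      rw [← sum_mul, ← Fintype.piFinset_univ, ← prod_univ_sum (fun _ : U => univ) fun _ e => w e,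
        prod_const, card_univ, Fintype.card_coe, ← mul_pow, mul_one_div]

end UniformColoring

section Recoloring

theorem sum_sum_eq_two_nsmul_add {V M : Type*} [Fintype V] [DecidableEq V] [AddCommMonoid M]
    {w : V → V → M} (hsymm : ∀ a x, w a x = w x a) (hdiag : ∀ a, w a a = 0) (v : V) :
    ∑ a, ∑ x, w a x = 2 • ∑ x, w v x + ∑ a ∈ univ.erase v, ∑ x ∈ univ.erase v, w a x := by
  have hsplit (g : V → M) : ∑ x, g x = g v + ∑ x ∈ univ.erase v, g x :=
    (add_sum_erase _ _ (mem_univ v)).symm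
  have hrow : ∑ a ∈ univ.erase v, w a v = ∑ x, w v x := by
    rw [hsplit, hdiag, zero_add]
    exact sum_congr rfl fun a _ => hsymm a v
  rw [hsplit fun a => ∑ x, w a x, sum_congr rfl fun a _ => hsplit (w a), sum_add_distrib, hrow,
    ← add_assoc, two_nsmul]

variable {V C : Type*} [Fintype V] [DecidableEq C] {w : V → V → ℕ}

/-- The total weight of the ordered pairs of vertices on which `f` is constant: the potential
minimized by recoloring. -/
def monochromaticWeight (w : V → V → ℕ) (f : V → C) : ℕ :=
  ∑ a, ∑ x, if f x = f a then w a x else 0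

theorem monochromaticWeight_le_update_iff [DecidableEq V] (hsymm : ∀ a x, w a x = w x a)
    (hdiag : ∀ a, w a a = 0) (f : V → C) (v : V) (c : C) :
    monochromaticWeight w f ≤ monochromaticWeight w (Function.update f v c) ↔
      (∑ x, if f x = f v then w v x else 0) ≤ ∑ x, if f x = c then w v x else 0 := by
  have hexpand (g : V → C) : monochromaticWeight w g =
      2 * (∑ x, if g x = g v then w v x else 0) +
        ∑ a ∈ univ.erase v, ∑ x ∈ univ.erase v, if g x = g a then w a x else 0 := by
    rw [← smul_eq_mul]
    exact sum_sum_eq_two_nsmul_add (fun a x => by simp only [hsymm a x, eq_comm])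
      (fun a => by simp only [hdiag, ite_self]) v
  have hrow : (∑ x, if Function.update f v c x = Function.update f v c v then w v x else 0) =
      ∑ x, if f x = c then w v x else 0 := by
    refine sum_congr rfl fun x _ => ?_
    rcases eq_or_ne x v with rfl | hx
    · simp only [hdiag, ite_self]
    · simp only [Function.update_of_ne hx, Function.update_self]
  have hrest : (∑ a ∈ univ.erase v, ∑ x ∈ univ.erase v,
        if Function.update f v c x = Function.update f v c a then w a x else 0) =
      ∑ a ∈ univ.erase v, ∑ x ∈ univ.erase v, if f x = f a then w a x else 0 :=
    sum_congr rfl fun a ha => sum_congr rfl fun x hx => by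
      rw [Function.update_of_ne (ne_of_mem_erase hx), Function.update_of_ne (ne_of_mem_erase ha)]
  rw [hexpand, hexpand, hrow, hrest]
  lia

theorem exists_recoloring_card_mul_sum_le [Fintype C] (hsymm : ∀ a x, w a x = w x a)
    (hdiag : ∀ a, w a a = 0) (W : Set V) (f₀ : V → C) :
    ∃ f : V → C, Set.EqOn f f₀ Wᶜ ∧ ∀ a ∈ W,
      Fintype.card C * (∑ x, if f x = f a then w a x else 0) ≤ ∑ x, w a x := by
  classical
  obtain ⟨f, hf, hmin⟩ := Set.exists_min_image {f : V → C | Set.EqOn f f₀ Wᶜ}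
    (monochromaticWeight w) (Set.toFinite _) ⟨f₀, Set.eqOn_refl _ _⟩
  refine ⟨f, hf, fun a ha => ?_⟩
  have hcolor (c : C) :
      (∑ x, if f x = f a then w a x else 0) ≤ ∑ x, if f x = c then w a x else 0 := by
    refine (monochromaticWeight_le_update_iff hsymm hdiag f a c).1 (hmin _ fun x hx => ?_)
    rw [Function.update_of_ne (ne_of_mem_of_not_mem ha hx).symm, hf hx]
  calc Fintype.card C * (∑ x, if f x = f a then w a x else 0)
    _ = ∑ _c : C, ∑ x, if f x = f a then w a x else 0 := by rw [sum_const, card_univ, smul_eq_mul]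
    _ ≤ ∑ c, ∑ x, if f x = c then w a x else 0 := sum_le_sum fun c _ => hcolor c
    _ = ∑ x, w a x := by
      rw [sum_comm]
      exact sum_congr rfl fun x _ => by simp

end Recoloring

section Codegree

variable {V C : Type*} [Fintype V] {G : SimpleGraph V} [DecidableRel G.Adj] {d : ℕ}

/-- The number of common neighbors of two distinct vertices. It is set to zero on the diagonal so
that sums over all pairs only see pairs of distinct vertices. -/
def offDiagCodegree [DecidableEq V] (G : SimpleGraph V) [DecidableRel G.Adj] (a x : V) : ℕ :=
  if x = a then 0 else #(G.neighborFinset a ∩ G.neighborFinset x)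

theorem offDiagCodegree_self [DecidableEq V] (a : V) : offDiagCodegree G a a = 0 := if_pos rfl

theorem offDiagCodegree_comm [DecidableEq V] (a x : V) :
    offDiagCodegree G a x = offDiagCodegree G x a := by
  simp only [offDiagCodegree, eq_comm, inter_comm]

theorem sum_offDiagCodegree_le [DecidableEq V] (hG : G.IsRegularOfDegree d) (a : V) :
    ∑ x, offDiagCodegree G a x ≤ d * d := by
  calc ∑ x, offDiagCodegree G a x
    _ ≤ ∑ x, #((G.neighborFinset a).bipartiteBelow G.Adj x) := by
      gcongr with x
      unfold offDiagCodegree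
      split_ifs
      · exact Nat.zero_le _
      · exact card_le_card fun u => by simp [G.adj_comm, mem_bipartiteBelow]
    _ = ∑ u ∈ G.neighborFinset a, G.degree u := by
      rw [← sum_card_bipartiteAbove_eq_sum_card_bipartiteBelow]
      exact sum_congr rfl fun u _ => congrArg card (G.neighborFinset_eq_filter).symm
    _ = d * d := by simp only [hG.degree_eq, sum_const, card_neighborFinset_eq_degree, smul_eq_mul]

theorem bad_le_sum_offDiagCodegree [DecidableEq V] [DecidableEq C] (f : V → C) (a : V) :
    Bad G f a ≤ ∑ x, if f x = f a then offDiagCodegree G a x else 0 := by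
  have hcover : {u | u ∈ G.neighborSet a ∧ ∃ x, x ∈ G.neighborSet u ∧ x ≠ a ∧ f x = f a} ⊆
      (({x | f x = f a ∧ x ≠ a} : Finset V).biUnion fun x =>
        G.neighborFinset a ∩ G.neighborFinset x : Finset V) := by
    rintro u ⟨hu, x, hx, hxa, hfx⟩
    simpa using ⟨hu, x, ⟨hfx, hxa⟩, hx.symm⟩
  calc Bad G f a
    _ ≤ _ := (Set.ncard_le_ncard hcover).trans_eq (Set.ncard_coe_finset _)
    _ ≤ ∑ x with f x = f a ∧ x ≠ a, #(G.neighborFinset a ∩ G.neighborFinset x) := card_biUnion_le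
    _ = ∑ x, if f x = f a then offDiagCodegree G a x else 0 := by
      rw [sum_filter]
      refine sum_congr rfl fun x _ => ?_
      by_cases hx : x = a <;> simp [offDiagCodegree, hx]

theorem exists_recoloring_two_mul_bad_le [Fintype C] (hG : G.IsRegularOfDegree d) (hd : 0 < d)
    (hC : 2 * d ≤ Fintype.card C) (W : Set V) (f₀ : V → C) :
    ∃ f : V → C, Set.EqOn f f₀ Wᶜ ∧ ∀ a ∈ W, 2 * Bad G f a ≤ d := by
  classical
  obtain ⟨f, hf, hW⟩ := exists_recoloring_card_mul_sum_le (w := offDiagCodegree G)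
    offDiagCodegree_comm offDiagCodegree_self W f₀
  refine ⟨f, hf, fun a ha => Nat.le_of_mul_le_mul_left ?_ hd⟩
  calc d * (2 * Bad G f a)
    _ = 2 * d * Bad G f a := by ring
    _ ≤ Fintype.card C * (∑ x, if f x = f a then offDiagCodegree G a x else 0) :=
      Nat.mul_le_mul hC (bad_le_sum_offDiagCodegree f a)
    _ ≤ d * d := (hW a ha).trans (sum_offDiagCodegree_le hG a)

end Codegree

section TailBounds

theorem div_one_add_le_one_sub_exp_neg {x : ℝ} (hx : -1 < x) :
    x / (1 + x) ≤ 1 - Real.exp (-x) := by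
  have hinv : (Real.exp x)⁻¹ ≤ (1 + x)⁻¹ :=
    inv_anti₀ (by linarith) ((add_comm 1 x).trans_le (Real.add_one_le_exp x))
  have hdiv : x / (1 + x) = 1 - (1 + x)⁻¹ := by
    have : 1 + x ≠ 0 := by linarith
    field_simp
    ring
  rw [Real.exp_neg]
  linarith

variable {V C : Type*} [Fintype V] [Fintype C] {α : ℝ}

-- The base of the Chernoff bound with `s = 1 / 8`. Its exponent is about `3 / (32 α) - 1 / (9 α)`.
theorem missedColor_rate_le (hα : 64 ≤ α) :
    Real.exp (-(1 / 8) * (1 - 3 / (4 * α))) *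
        (1 + (Real.exp (1 / 8) - 1) * Real.exp (-(1 / α))) ≤ Real.exp (-(1 / (100 * α))) := by
  set z := Real.exp (-(1 / 8))
  set q := Real.exp (-(1 / α))
  have hz : 1 / 9 ≤ 1 - z :=
    (by norm_num : (1 / 9 : ℝ) = _).trans_le
      (div_one_add_le_one_sub_exp_neg (x := 1 / 8) (by norm_num))
  have hq : 1 / (α + 1) ≤ 1 - q := by
    have hα' : 0 < 1 / α := by positivity
    convert div_one_add_le_one_sub_exp_neg (x := 1 / α) (by linarith) using 1
    field_simp
  have hbase : z * (1 + (Real.exp (1 / 8) - 1) * q) ≤ Real.exp (-(1 / (9 * (α + 1)))) := calc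
    z * (1 + (Real.exp (1 / 8) - 1) * q)
    _ = 1 - (1 - z) * (1 - q) := by
      have : z * Real.exp (1 / 8) = 1 := by rw [← Real.exp_add]; norm_num
      linear_combination q * this
    _ ≤ 1 - 1 / 9 * (1 / (α + 1)) := by gcongr
    _ = 1 - 1 / (9 * (α + 1)) := by field_simp
    _ ≤ Real.exp (-(1 / (9 * (α + 1)))) := Real.one_sub_le_exp_neg _
  calc Real.exp (-(1 / 8) * (1 - 3 / (4 * α))) * (1 + (Real.exp (1 / 8) - 1) * q)
    _ = Real.exp (3 / (32 * α)) * (z * (1 + (Real.exp (1 / 8) - 1) * q)) := by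
      rw [← mul_assoc, ← Real.exp_add]
      ring_nf
    _ ≤ Real.exp (3 / (32 * α)) * Real.exp (-(1 / (9 * (α + 1)))) := by gcongr
    _ = Real.exp (3 / (32 * α) + -(1 / (9 * (α + 1)))) := (Real.exp_add _ _).symm
    _ ≤ Real.exp (-(1 / (100 * α))) := by
      gcongr
      have : 3 / (32 * α) + 1 / (100 * α) ≤ 1 / (9 * (α + 1)) := by
        rw [div_add_div _ _ (by positivity) (by positivity),
          div_le_div_iff₀ (by positivity) (by positivity)]
        nlinarith
      linarith

theorem crowdedColor_rate_le (hα : 64 ≤ α) :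
    Real.exp (-Real.log 2 * (1 / (4 * α))) * (1 + (Real.exp (Real.log 2) - 1) * (2 / α ^ 2)) ≤
      Real.exp (-(1 / (100 * α))) := by
  have hsq : 2 / α ^ 2 ≤ 1 / (32 * α) := by
    rw [div_le_div_iff₀ (by positivity) (by positivity)]
    nlinarith
  calc Real.exp (-Real.log 2 * (1 / (4 * α))) * (1 + (Real.exp (Real.log 2) - 1) * (2 / α ^ 2))
    _ = Real.exp (-Real.log 2 * (1 / (4 * α))) * (2 / α ^ 2 + 1) := by
      rw [Real.exp_log two_pos]
      ring
    _ ≤ Real.exp (-(1 / 2) * (1 / (4 * α))) * Real.exp (1 / (32 * α)) := by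
      gcongr
      · linarith [Real.log_two_gt_d9]
      · exact (add_le_add_left hsq 1).trans (Real.add_one_le_exp _)
    _ = Real.exp (-(1 / 2) * (1 / (4 * α)) + 1 / (32 * α)) := (Real.exp_add _ _).symm
    _ ≤ Real.exp (-(1 / (100 * α))) := by
      gcongr
      have : 0 < 1 / α := by positivity
      calc -(1 / 2) * (1 / (4 * α)) + 1 / (32 * α)
        _ = -(3 / 32) * (1 / α) := by field_simp; norm_num
        _ ≤ -(1 / 100) * (1 / α) := by linarith
        _ = -(1 / (100 * α)) := by field_simp

variable [MeasurableSpace C] [MeasurableSingletonClass C] [Nonempty C]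

theorem uniformColoring_real_card_inter_image_lt_le [DecidableEq C] (hα : 64 ≤ α) {K : Finset V}
    (hK : (Fintype.card C : ℝ) = α * #K) (D : Finset C) :
    (uniformColoring V C).real {f | (#(D ∩ K.image f) : ℝ) < 3 / (4 * α) * #D} ≤
      Real.exp (-(1 / (100 * α))) ^ #D := by
  classical
  let missed (c : C) : Set (V → C) := {f | ∀ a ∈ K, f a ≠ c}
  have hmissed (f : V → C) : #{c ∈ D | f ∈ missed c} + #(D ∩ K.image f) = #D := by
    have := card_filter_add_card_filter_not (s := D) (· ∈ K.image f)
    rw [filter_mem_eq_inter, add_comm] at this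
    simpa [missed] using this
  have hratio : (#K / Fintype.card C : ℝ) = 1 / α := by
    have hcard : (0 : ℝ) < α * #K := hK ▸ Nat.cast_pos.2 Fintype.card_pos
    rw [hK, div_eq_div_iff hcard.ne' (by positivity)]
    ring
  have hq : ∀ U ⊆ D, (uniformColoring V C).real (⋂ c ∈ U, missed c) ≤
      Real.exp (-(1 / α)) ^ #U := fun U _ => by
    rw [← hratio]
    exact uniformColoring_real_forall_ne_le K U
  calc (uniformColoring V C).real {f | (#(D ∩ K.image f) : ℝ) < 3 / (4 * α) * #D}
    _ ≤ (uniformColoring V C).real {f | (1 - 3 / (4 * α)) * #D ≤ #{c ∈ D | f ∈ missed c}} := by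
      refine measureReal_mono fun f hf => ?_
      have hsum : (#{c ∈ D | f ∈ missed c} + #(D ∩ K.image f) : ℝ) = #D := by
        exact_mod_cast hmissed f
      simp only [Set.mem_ofPred_eq] at hf ⊢
      linarith
    _ ≤ (Real.exp (-(1 / 8) * (1 - 3 / (4 * α))) *
          (1 + (Real.exp (1 / 8) - 1) * Real.exp (-(1 / α)))) ^ #D :=
      measureReal_mul_card_le_card_le (fun c _ => (Set.toFinite (missed c)).measurableSet) hq
        (by norm_num) _
    _ ≤ Real.exp (-(1 / (100 * α))) ^ #D := by
      gcongr
      · have : 0 ≤ Real.exp (1 / 8) - 1 := sub_nonneg.2 (Real.one_le_exp (by norm_num))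
        positivity
      · exact missedColor_rate_le hα

end TailBounds

section Crowding

variable {V C : Type*} [Fintype V] {G : SimpleGraph V} [DecidableRel G.Adj]
  {d : ℕ} {α : ℝ}

/-- The vertices `a` more than half of whose neighbors `u` are adjacent to a second vertex with
the color of `a`. -/
noncomputable def crowded (G : SimpleGraph V) [DecidableRel G.Adj] (f : V → C) : Finset V :=
  {a | G.degree a < 2 * Bad G f a}

theorem mem_crowded {f : V → C} {a : V} : a ∈ crowded G f ↔ G.degree a < 2 * Bad G f a := by
  simp [crowded]

variable [DecidableEq V]

/-- Normalized codegrees with the neighbors of `b`. The monochromatic pairs inside a color class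
have total weight at least `1` if the class contains a crowded neighbor of `b`. -/
noncomputable def crowdingWeight (G : SimpleGraph V) [DecidableRel G.Adj] (b : V) (e : V × V) : ℝ :=
  if G.Adj b e.1 then 2 / G.degree e.1 * offDiagCodegree G e.1 e.2 else 0

theorem crowdingWeight_nonneg (b : V) : 0 ≤ crowdingWeight G b := by
  intro e
  unfold crowdingWeight
  positivity

theorem crowdingWeight_self (b v : V) : crowdingWeight G b (v, v) = 0 := by
  simp [crowdingWeight, offDiagCodegree_self]

theorem sum_crowdingWeight_le (hG : G.IsRegularOfDegree d) (b : V) :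
    ∑ e, crowdingWeight G b e ≤ 2 * d ^ 2 := by
  have hrow (a : V) : ∑ x, (2 / d * offDiagCodegree G a x : ℝ) ≤ 2 * d := calc
    ∑ x, (2 / d * offDiagCodegree G a x : ℝ)
    _ = 2 / d * (∑ x, offDiagCodegree G a x : ℕ) := by rw [← mul_sum, Nat.cast_sum]
    _ ≤ 2 / d * (d * d : ℕ) := by
      gcongr
      exact sum_offDiagCodegree_le hG a
    _ = 2 * d := by
      rcases eq_or_ne d 0 with rfl | hd
      · simp
      · push_cast
        field_simp
  calc ∑ e, crowdingWeight G b e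
    _ = ∑ a ∈ G.neighborFinset b, ∑ x, (2 / d * offDiagCodegree G a x : ℝ) := by
      rw [Fintype.sum_prod_type, neighborFinset_eq_filter, sum_filter]
      refine sum_congr rfl fun a _ => ?_
      split_ifs with ha <;> simp [crowdingWeight, ha, hG.degree_eq]
    _ ≤ #(G.neighborFinset b) • (2 * d : ℝ) := sum_le_card_nsmul _ _ _ fun a _ => hrow a
    _ = 2 * d ^ 2 := by
      rw [card_neighborFinset_eq_degree, hG.degree_eq, nsmul_eq_mul]
      ring

variable [DecidableEq C]

theorem one_le_sum_crowdingWeight {f : V → C} {b : V} {c : C}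
    (hc : c ∈ (G.neighborFinset b ∩ crowded G f).image f) :
    1 ≤ ∑ e, if f e.1 = c ∧ f e.2 = c then crowdingWeight G b e else 0 := by
  obtain ⟨a, ha, rfl⟩ := mem_image.1 hc
  obtain ⟨hab, hcrowded⟩ := mem_inter.1 ha
  rw [mem_neighborFinset] at hab
  have hdeg : (0 : ℝ) < G.degree a :=
    Nat.cast_pos.2 ((G.degree_pos_iff_exists_adj a).2 ⟨b, hab.symm⟩)
  have hnonneg (v : V) :
      0 ≤ ∑ x, if f v = f a ∧ f x = f a then crowdingWeight G b (v, x) else 0 :=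
    sum_nonneg fun x _ => ite_nonneg (crowdingWeight_nonneg b _) le_rfl
  calc (1 : ℝ)
    _ ≤ 2 / G.degree a * Bad G f a := by
      rw [div_mul_eq_mul_div, one_le_div hdeg]
      exact_mod_cast (mem_crowded.1 hcrowded).le
    _ ≤ 2 / G.degree a * (∑ x, if f x = f a then offDiagCodegree G a x else 0 : ℕ) := by
      gcongr
      exact bad_le_sum_offDiagCodegree f a
    _ = ∑ x, if f a = f a ∧ f x = f a then crowdingWeight G b (a, x) else 0 := by
      rw [Nat.cast_sum, mul_sum]
      exact sum_congr rfl fun x _ => by split_ifs <;> simp_all [crowdingWeight]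
    _ ≤ ∑ e, if f e.1 = f a ∧ f e.2 = f a then crowdingWeight G b e else 0 := by
      rw [Fintype.sum_prod_type]
      exact single_le_sum (fun v _ => hnonneg v) (mem_univ a)

variable [Fintype C] [MeasurableSpace C] [MeasurableSingletonClass C] [Nonempty C]

theorem uniformColoring_real_lt_card_inter_image_crowded_le (hα : 64 ≤ α)
    (hG : G.IsRegularOfDegree d) (hC : (Fintype.card C : ℝ) = α * d) (b : V) (D : Finset C) :
    (uniformColoring V C).real
        {f | 1 / (4 * α) * #D < #(D ∩ (G.neighborFinset b ∩ crowded G f).image f)} ≤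
      Real.exp (-(1 / (100 * α))) ^ #D := by
  let heavy (c : C) : Set (V → C) :=
    {f | 1 ≤ ∑ e, if f e.1 = c ∧ f e.2 = c then crowdingWeight G b e else 0}
  have hd : (0 : ℝ) < d := by
    have : (0 : ℝ) < α * d := hC ▸ Nat.cast_pos.2 Fintype.card_pos
    exact pos_of_mul_pos_right this (by linarith)
  have hratio : (∑ e, crowdingWeight G b e) / (Fintype.card C : ℝ) ^ 2 ≤ 2 / α ^ 2 := calc
    (∑ e, crowdingWeight G b e) / (Fintype.card C : ℝ) ^ 2
    _ ≤ 2 * d ^ 2 / (Fintype.card C : ℝ) ^ 2 := by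
      gcongr
      exact sum_crowdingWeight_le hG b
    _ = 2 / α ^ 2 := by
      rw [hC]
      field_simp
  have hq : ∀ U ⊆ D, (uniformColoring V C).real (⋂ c ∈ U, heavy c) ≤ (2 / α ^ 2) ^ #U :=
    fun U _ => (uniformColoring_real_one_le_sum_pair_le (crowdingWeight_nonneg b)
      (crowdingWeight_self b) U).trans <| pow_le_pow_left₀
        (div_nonneg (sum_nonneg fun e _ => crowdingWeight_nonneg b e) (by positivity)) hratio _
  classical
  calc (uniformColoring V C).real
        {f | 1 / (4 * α) * #D < #(D ∩ (G.neighborFinset b ∩ crowded G f).image f)}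
    _ ≤ (uniformColoring V C).real {f | 1 / (4 * α) * #D ≤ #{c ∈ D | f ∈ heavy c}} := by
      refine measureReal_mono fun f hf => ?_
      simp only [Set.mem_ofPred_eq] at hf ⊢
      refine hf.le.trans ?_
      gcongr
      intro c hc
      rw [mem_inter] at hc
      exact mem_filter.2 ⟨hc.1, one_le_sum_crowdingWeight hc.2⟩
    _ ≤ (Real.exp (-Real.log 2 * (1 / (4 * α))) *
          (1 + (Real.exp (Real.log 2) - 1) * (2 / α ^ 2))) ^ #D :=
      measureReal_mul_card_le_card_le (fun c _ => (Set.toFinite (heavy c)).measurableSet) hq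
        (Real.log_nonneg one_le_two) _
    _ ≤ Real.exp (-(1 / (100 * α))) ^ #D := by
      gcongr
      · have : 0 ≤ Real.exp (Real.log 2) - 1 := by norm_num [Real.exp_log]
        positivity
      · exact crowdedColor_rate_le hα

end Crowding

section WalkEndpoints

variable {V : Type*} [Fintype V] {G : SimpleGraph V} {d k l : ℕ} {u v : V}

open Classical in
/-- The vertices at the end of a walk of length exactly `k` from `u`. -/
noncomputable def walkEndpoints (G : SimpleGraph V) (k : ℕ) (u : V) : Finset V :=
  {v | ∃ p : G.Walk u v, p.length = k}

theorem mem_walkEndpoints : v ∈ walkEndpoints G k u ↔ ∃ p : G.Walk u v, p.length = k := by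
  simp [walkEndpoints]

theorem card_walkEndpoints_le [DecidableRel G.Adj] (hG : G.IsRegularOfDegree d) (k : ℕ) (u : V) :
    #(walkEndpoints G k u) ≤ d ^ k := by
  classical
  induction k generalizing u with
  | zero =>
    refine card_le_one.2 fun v hv w hw => ?_
    obtain ⟨p, hp⟩ := mem_walkEndpoints.1 hv
    obtain ⟨q, hq⟩ := mem_walkEndpoints.1 hw
    rw [← Walk.eq_of_length_eq_zero hp, Walk.eq_of_length_eq_zero hq]
  | succ k ih =>
    have hstep : walkEndpoints G (k + 1) u ⊆ (G.neighborFinset u).biUnion (walkEndpoints G k) := by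
      intro v hv
      obtain ⟨_ | ⟨huw, p⟩, hp⟩ := mem_walkEndpoints.1 hv
      · simp at hp
      · exact mem_biUnion.2 ⟨_, (G.mem_neighborFinset _ _).2 huw,
          mem_walkEndpoints.2 ⟨p, Nat.succ.inj hp⟩⟩
    calc #(walkEndpoints G (k + 1) u)
      _ ≤ #(G.neighborFinset u) * d ^ k :=
        (card_le_card hstep).trans (card_biUnion_le_card_mul _ _ _ fun w _ => ih w)
      _ = d ^ (k + 1) := by rw [card_neighborFinset_eq_degree, hG.degree_eq, pow_succ']

theorem disjoint_walkEndpoints (h : v ∉ walkEndpoints G (k + l) u) :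
    Disjoint (walkEndpoints G k u) (walkEndpoints G l v) := by
  refine disjoint_left.2 fun w hu hv => h ?_
  obtain ⟨p, rfl⟩ := mem_walkEndpoints.1 hu
  obtain ⟨q, rfl⟩ := mem_walkEndpoints.1 hv
  exact mem_walkEndpoints.2 ⟨p.append q.reverse, by rw [Walk.length_append, Walk.length_reverse]⟩

end WalkEndpoints

section BadEvents

variable {V C ι : Type*} {G : SimpleGraph V} {d : ℕ} {α : ℝ}

theorem bad_congr {f g : V → C} {a : V} (ha : f a = g a)
    (hfg : ∀ u, G.Adj a u → ∀ x, G.Adj u x → f x = g x) : Bad G f a = Bad G g a := by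
  unfold Bad
  congr 1
  ext u
  simp only [Set.mem_ofPred_eq, mem_neighborSet, ha]
  refine and_congr_right fun hu => exists_congr fun x => and_congr_right fun hx => ?_
  rw [hfg u hu x hx]

variable [Fintype V] [DecidableEq V] [DecidableEq C] [DecidableRel G.Adj]

/-- The colorings under which, for some set `D i` of colors, the neighbors of `b` show too few
colors of `D i` or the crowded ones among them show too many. -/
def badEvent (G : SimpleGraph V) [DecidableRel G.Adj] (α : ℝ) (D : ι → Finset C) (b : V) :
    Set (V → C) :=
  {f | ∃ i, (#(D i ∩ (G.neighborFinset b).image f) : ℝ) < 3 / (4 * α) * #(D i) ∨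
    1 / (4 * α) * #(D i) < #(D i ∩ (G.neighborFinset b ∩ crowded G f).image f)}

theorem dependsOn_badEvent (α : ℝ) (D : ι → Finset C) (b : V) :
    DependsOn (· ∈ badEvent G α D b) (walkEndpoints G 3 b : Set V) := by
  intro f g hfg
  have hwalk {a u x : V} (hba : G.Adj b a) (hau : G.Adj a u) (hux : G.Adj u x) : f x = g x :=
    hfg x (mem_walkEndpoints.2 ⟨.cons hba (.cons hau (.cons hux .nil)), rfl⟩)
  have hnbr {a : V} (hba : G.Adj b a) : f a = g a := hwalk hba hba.symm hba
  have himage {K : Finset V} (hK : K ⊆ G.neighborFinset b) : K.image f = K.image g :=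
    image_congr fun a ha => hnbr ((G.mem_neighborFinset b a).1 (hK ha))
  have hcrowded : G.neighborFinset b ∩ crowded G f = G.neighborFinset b ∩ crowded G g := by
    ext a
    simp only [mem_inter, mem_neighborFinset, mem_crowded]
    refine and_congr_right fun hba => ?_
    rw [bad_congr (hnbr hba) fun u hau x hux => hwalk hba hau hux]
  simp only [badEvent, Set.mem_ofPred_eq, hcrowded, himage subset_rfl, himage inter_subset_left]

variable [Fintype C] [Fintype ι]

theorem uniformColoring_real_badEvent_le [Nonempty C] [MeasurableSpace C]
    [MeasurableSingletonClass C] (hα : 64 ≤ α) (hG : G.IsRegularOfDegree d)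
    (hC : (Fintype.card C : ℝ) = α * d) {D : ι → Finset C} {m : ℕ} (hD : ∀ i, m ≤ #(D i)) (b : V) :
    (uniformColoring V C).real (badEvent G α D b) ≤
      2 * Fintype.card ι * Real.exp (-(1 / (100 * α))) ^ m := by
  have hexp : Real.exp (-(1 / (100 * α))) ≤ 1 := Real.exp_le_one_iff.2 (by simp; linarith)
  have hdeg : (Fintype.card C : ℝ) = α * #(G.neighborFinset b) := by
    rw [hC, card_neighborFinset_eq_degree, hG.degree_eq]
  let few (i : ι) : Set (V → C) :=
    {f | (#(D i ∩ (G.neighborFinset b).image f) : ℝ) < 3 / (4 * α) * #(D i)}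
  let many (i : ι) : Set (V → C) :=
    {f | 1 / (4 * α) * #(D i) < #(D i ∩ (G.neighborFinset b ∩ crowded G f).image f)}
  have hunion : badEvent G α D b = ⋃ i, few i ∪ many i := by
    ext f
    simp [badEvent, few, many]
  have hterm (i : ι) : (uniformColoring V C).real (few i ∪ many i) ≤
      2 * Real.exp (-(1 / (100 * α))) ^ m := calc
    (uniformColoring V C).real (few i ∪ many i)
    _ ≤ (uniformColoring V C).real (few i) + (uniformColoring V C).real (many i) :=
      measureReal_union_le _ _
    _ ≤ Real.exp (-(1 / (100 * α))) ^ #(D i) + Real.exp (-(1 / (100 * α))) ^ #(D i) :=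
      add_le_add (uniformColoring_real_card_inter_image_lt_le hα hdeg (D i))
        (uniformColoring_real_lt_card_inter_image_crowded_le hα hG hC b (D i))
    _ = 2 * Real.exp (-(1 / (100 * α))) ^ #(D i) := (two_mul _).symm
    _ ≤ 2 * Real.exp (-(1 / (100 * α))) ^ m :=
      mul_le_mul_of_nonneg_left (pow_le_pow_of_le_one (Real.exp_nonneg _) hexp (hD i)) two_pos.le
  calc (uniformColoring V C).real (badEvent G α D b)
    _ ≤ ∑ i, (uniformColoring V C).real (few i ∪ many i) :=
      hunion ▸ measureReal_iUnion_fintype_le _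
    _ ≤ Fintype.card ι • (2 * Real.exp (-(1 / (100 * α))) ^ m) :=
      sum_le_card_nsmul _ _ _ fun i _ => hterm i
    _ = 2 * Fintype.card ι * Real.exp (-(1 / (100 * α))) ^ m := by
      rw [nsmul_eq_mul]
      ring

theorem exists_coloring_forall_notMem_badEvent (hα : 64 ≤ α) (hG : G.IsRegularOfDegree d)
    (hd : 0 < d) (hC : (Fintype.card C : ℝ) = α * d) {D : ι → Finset C} {m : ℕ}
    (hD : ∀ i, m ≤ #(D i))
    (hm : 8 * Fintype.card ι * d ^ 6 * Real.exp (-(1 / (100 * α))) ^ m ≤ 1) :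
    ∃ f : V → C, ∀ b, f ∉ badEvent G α D b := by
  let _ : MeasurableSpace C := ⊤
  have : Nonempty C := by
    have : (0 : ℝ) < Fintype.card C := hC ▸ by positivity
    exact Fintype.card_pos_iff.1 (Nat.cast_pos.1 this)
  refine exists_forall_notMem_of_dependsOn (fun _ => uniformOn Set.univ)
    (fun b => (Set.toFinite _).measurableSet) (dependsOn_badEvent α D) (by positivity)
    (uniformColoring_real_badEvent_le hα hG hC hD) (Γ := walkEndpoints G 6)
    (fun _ _ => disjoint_walkEndpoints (k := 3) (l := 3)) (card_walkEndpoints_le hG 6)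
    (by positivity) ?_
  push_cast
  linarith

end BadEvents

section Selection

variable {V C ι : Type*} {G : SimpleGraph V} {d : ℕ} {α : ℝ}

theorem exists_injOn_representatives (f : V → C) (K W : Finset V) :
    ∃ R ⊆ K, Set.InjOn f R ∧ ∀ a ∈ K, ∃ r ∈ R, f r = f a ∧ (a ∉ W → r ∉ W) := by
  classical
  have hrep : ∀ c ∈ K.image f, ∃ r ∈ K, f r = c ∧ (c ∈ (K \ W).image f → r ∉ W) := by
    intro c hc
    by_cases hc' : c ∈ (K \ W).image f
    · obtain ⟨r, hr, hrc⟩ := mem_image.1 hc'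
      exact ⟨r, (mem_sdiff.1 hr).1, hrc, fun _ => (mem_sdiff.1 hr).2⟩
    · obtain ⟨r, hr, hrc⟩ := mem_image.1 hc
      exact ⟨r, hr, hrc, fun h => absurd h hc'⟩
  obtain rfl | ⟨v, -⟩ := K.eq_empty_or_nonempty
  · exact ⟨∅, by simp⟩
  have : Nonempty V := ⟨v⟩
  choose! rep hrepK hrepf hrepW using hrep
  refine ⟨(K.image f).image rep, image_subset_iff.2 hrepK, ?_, fun a ha => ?_⟩
  · intro r hr s hs hrs
    obtain ⟨c, hc, rfl⟩ := mem_image.1 (mem_coe.1 hr)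
    obtain ⟨c', hc', rfl⟩ := mem_image.1 (mem_coe.1 hs)
    rw [hrepf c hc, hrepf c' hc'] at hrs
    rw [hrs]
  · have hfa := mem_image_of_mem f ha
    exact ⟨rep (f a), mem_image_of_mem rep hfa, hrepf _ hfa,
      fun haW => hrepW _ hfa (mem_image_of_mem f (mem_sdiff.2 ⟨ha, haW⟩))⟩

theorem card_inter_image_le_card_filter [DecidableEq C] {f : V → C} {K R : Finset V}
    (hR : ∀ a ∈ K, ∃ r ∈ R, f r = f a) (D : Finset C) :
    #(D ∩ K.image f) ≤ #{r ∈ R | f r ∈ D} := by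
  refine (card_le_card fun c hc => ?_).trans (card_image_le (f := f))
  obtain ⟨hcD, hcK⟩ := mem_inter.1 hc
  obtain ⟨a, ha, rfl⟩ := mem_image.1 hcK
  obtain ⟨r, hrR, hrf⟩ := hR a ha
  exact mem_image.2 ⟨r, mem_filter.2 ⟨hrR, hrf ▸ hcD⟩, hrf⟩

variable [Fintype V] [DecidableEq V] [DecidableRel G.Adj]

theorem degree_le_two_mul_card {f : V → C} {R : V → Finset V} {a : V}
    (hbad : 2 * Bad G f a ≤ G.degree a)
    (hR : ∀ b, G.Adj a b → a ∉ R b → ∃ x, G.Adj b x ∧ x ≠ a ∧ f x = f a) :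
    G.degree a ≤ 2 * #{b ∈ G.neighborFinset a | a ∈ R b} := by
  have hlost : #{b ∈ G.neighborFinset a | a ∉ R b} ≤ Bad G f a := by
    rw [← Set.ncard_coe_finset]
    refine Set.ncard_le_ncard fun b hb => ?_
    simp only [coe_filter, mem_neighborFinset, Set.mem_ofPred_eq] at hb
    exact ⟨hb.1, hR b hb.1 hb.2⟩
  have hsplit := card_filter_add_card_filter_not (s := G.neighborFinset a) (a ∈ R ·)
  rw [card_neighborFinset_eq_degree] at hsplit
  lia

variable [DecidableEq C]

theorem card_inter_image_sdiff_crowded_ge {D : ι → Finset C} {f : V → C} {b : V}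
    (hf : f ∉ badEvent G α D b) (i : ι) :
    1 / (2 * α) * #(D i) ≤ #(D i ∩ (G.neighborFinset b \ crowded G f).image f) := by
  simp only [badEvent, Set.mem_ofPred_eq, not_exists, not_or, not_lt] at hf
  obtain ⟨hmany, hfew⟩ := hf i
  have hsplit : #(D i ∩ (G.neighborFinset b).image f) ≤
      #(D i ∩ (G.neighborFinset b \ crowded G f).image f) +
        #(D i ∩ (G.neighborFinset b ∩ crowded G f).image f) := by
    rw [← sdiff_union_inter (G.neighborFinset b) (crowded G f), image_union,
      inter_union_distrib_left, sdiff_union_inter]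
    exact card_union_le _ _
  have hsplit' : (#(D i ∩ (G.neighborFinset b).image f) : ℝ) ≤
      #(D i ∩ (G.neighborFinset b \ crowded G f).image f) +
        #(D i ∩ (G.neighborFinset b ∩ crowded G f).image f) := by exact_mod_cast hsplit
  have hquarters : 1 / (2 * α) * #(D i) = 3 / (4 * α) * #(D i) - 1 / (4 * α) * #(D i) := by ring
  linarith

theorem exists_coloring_forall_exists_representatives [Fintype C] [Fintype ι] (hα : 64 ≤ α)
    (hG : G.IsRegularOfDegree d) (hd : 0 < d) (hC : (Fintype.card C : ℝ) = α * d)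
    {D : ι → Finset C} {m : ℕ} (hD : ∀ i, m ≤ #(D i))
    (hm : 8 * Fintype.card ι * d ^ 6 * Real.exp (-(1 / (100 * α))) ^ m ≤ 1) :
    ∃ (f : V → C) (R : V → Finset V), (∀ b, R b ⊆ G.neighborFinset b) ∧
      (∀ b, Set.InjOn f (R b)) ∧ (∀ a, d ≤ 2 * #{b ∈ G.neighborFinset a | a ∈ R b}) ∧
      ∀ b i, 1 / (2 * α) * #(D i) ≤ #{a ∈ R b | f a ∈ D i} := by
  obtain ⟨f₀, hf₀⟩ := exists_coloring_forall_notMem_badEvent (G := G) hα hG hd hC hD hm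
  have hcard : 2 * d ≤ Fintype.card C := by
    have : (2 * d : ℝ) ≤ Fintype.card C := hC ▸ by gcongr; linarith
    exact_mod_cast this
  obtain ⟨f, hf, hcrowded⟩ :=
    exists_recoloring_two_mul_bad_le hG hd hcard (crowded G f₀ : Set V) f₀
  have hff₀ {a : V} (ha : a ∉ crowded G f₀) : f a = f₀ a := hf ha
  choose R hRK hRinj hRrep using
    fun b => exists_injOn_representatives f (G.neighborFinset b) (crowded G f₀)
  have hRadj {b r : V} (hr : r ∈ R b) : G.Adj b r := (G.mem_neighborFinset b r).1 (hRK b hr)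
  refine ⟨f, R, hRK, hRinj, fun a => ?_, fun b i => ?_⟩
  · have hrep {b : V} (hab : G.Adj a b) := hRrep b a ((G.mem_neighborFinset b a).2 hab.symm)
    rw [← hG.degree_eq a]
    by_cases ha : a ∈ crowded G f₀
    · refine degree_le_two_mul_card (f := f) (hG.degree_eq a ▸ hcrowded a ha) fun b hab haR => ?_
      obtain ⟨r, hrR, hrf, -⟩ := hrep hab
      exact ⟨r, hRadj hrR, ne_of_mem_of_not_mem hrR haR, hrf⟩
    · refine degree_le_two_mul_card (f := f₀) (not_lt.1 (mt mem_crowded.2 ha)) fun b hab haR => ?_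
      obtain ⟨r, hrR, hrf, hrW⟩ := hrep hab
      rw [hff₀ ha, hff₀ (hrW ha)] at hrf
      exact ⟨r, hRadj hrR, ne_of_mem_of_not_mem hrR haR, hrf⟩
  · have himage : (G.neighborFinset b \ crowded G f₀).image f₀ =
        (G.neighborFinset b \ crowded G f₀).image f :=
      image_congr fun a ha => (hff₀ (mem_sdiff.1 ha).2).symm
    refine (card_inter_image_sdiff_crowded_ge (hf₀ b) i).trans ?_
    rw [himage, Nat.cast_le]
    refine card_inter_image_le_card_filter (fun a ha => ?_) (D i)
    obtain ⟨r, hrR, hrf, -⟩ := hRrep b a (mem_sdiff.1 ha).1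
    exact ⟨r, hrR, hrf⟩

end Selection

section SelectionGraph

variable {V : Type*} {G : SimpleGraph V} {A B : Set V} {R : V → Finset V}

/-- The graph in which each `b` is joined to those chosen neighbors `R b` that lie in
`A`; it turns a choice of neighbors into the spanning subgraph `H` of the theorem. -/
def selectionGraph (A : Set V) (R : V → Finset V) : SimpleGraph V :=
  SimpleGraph.fromRel fun a b => a ∈ A ∧ a ∈ R b

theorem selectionGraph_le (hR : ∀ b, ∀ a ∈ R b, G.Adj b a) : selectionGraph A R ≤ G := by
  rintro u v ⟨-, ⟨-, h⟩ | ⟨-, h⟩⟩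
  exacts [(hR v u h).symm, hR u v h]

theorem neighborSet_selectionGraph_left (hAB : G.IsBipartiteWith A B)
    (hR : ∀ b, ∀ a ∈ R b, G.Adj b a) {a : V} (ha : a ∈ A) :
    (selectionGraph A R).neighborSet a = {b | G.Adj a b ∧ a ∈ R b} := by
  ext b
  refine ⟨?_, fun ⟨hab, haR⟩ => ⟨hab.ne, Or.inl ⟨ha, haR⟩⟩⟩
  rintro ⟨-, ⟨-, haR⟩ | ⟨hb, hbR⟩⟩
  · exact ⟨(hR b a haR).symm, haR⟩
  · exact absurd hb (hAB.disjoint.notMem_of_mem_right (hAB.mem_of_mem_adj ha (hR a b hbR)))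

theorem neighborSet_selectionGraph_right (hAB : G.IsBipartiteWith A B)
    (hR : ∀ b, ∀ a ∈ R b, G.Adj b a) {b : V} (hb : b ∈ B) :
    (selectionGraph A R).neighborSet b = R b := by
  ext a
  refine ⟨?_, fun haR => ⟨(hR b a haR).ne, Or.inr ⟨?_, haR⟩⟩⟩
  · rintro ⟨-, ⟨hbA, -⟩ | ⟨-, haR⟩⟩
    exacts [absurd hb (hAB.disjoint.notMem_of_mem_left hbA), haR]
  · exact hAB.symm.mem_of_mem_adj hb (hR b a haR)

end SelectionGraph

theorem exists_forall_mul_pow_mul_exp_neg_pow_le_one {ε K κ : ℝ} (hε : 0 < ε) (hK : 0 ≤ K)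
    (hκ : 0 < κ) (k : ℕ) :
    ∃ d₀ : ℕ, ∀ d ≥ d₀, ∀ m : ℕ, (d : ℝ) ^ ε ≤ m → K * d ^ k * Real.exp (-κ) ^ m ≤ 1 := by
  have hlim : Filter.Tendsto
      (fun d : ℕ => K * (((d : ℝ) ^ ε) ^ (k / ε) * Real.exp (-κ * (d : ℝ) ^ ε)))
      Filter.atTop (nhds (K * 0)) :=
    ((tendsto_rpow_mul_exp_neg_mul_atTop_nhds_zero (k / ε) κ hκ).comp
      ((tendsto_rpow_atTop hε).comp tendsto_natCast_atTop_atTop)).const_mul K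
  obtain ⟨d₀, hd₀⟩ := Filter.eventually_atTop.1
    (hlim.eventually_le_const (show K * 0 < 1 by simp))
  refine ⟨d₀, fun d hd m hm => le_trans ?_ (hd₀ d hd)⟩
  have hpow : ((d : ℝ) ^ ε) ^ (k / ε) = (d : ℝ) ^ k := by
    rw [← Real.rpow_mul d.cast_nonneg, mul_div_cancel₀ _ hε.ne', Real.rpow_natCast]
  have hexp : Real.exp (-κ) ^ m ≤ Real.exp (-κ * (d : ℝ) ^ ε) := by
    rw [← Real.exp_nat_mul, mul_comm]
    exact Real.exp_le_exp.2 (mul_le_mul_of_nonpos_left hm (neg_nonpos.2 hκ.le))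
  rw [hpow, mul_assoc]
  gcongr

theorem RegularDeg.isRegularOfDegree {V : Type*} {G : SimpleGraph V} [G.LocallyFinite] {d : ℕ}
    (hG : RegularDeg G d) : G.IsRegularOfDegree d := fun v => by
  rw [← hG v, deg, Set.ncard_eq_toFinset_card', ← card_neighborFinset_eq_degree]
  rfl

theorem minDeg_le_card_neighborFinset {C : Type*} [Fintype C] (𝒢 : SimpleGraph C)
    [DecidableRel 𝒢.Adj] (c : C) : minDeg 𝒢 ≤ #(𝒢.neighborFinset c) := by
  have hle : minDeg 𝒢 ≤ deg 𝒢 c := ciInf_le (OrderBot.bddBelow _) c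
  rwa [deg, Set.ncard_eq_toFinset_card'] at hle

theorem statement3_general.{u, v} {ε : ℝ} (hε : 0 < ε) {α : ℝ} (hα : 64 ≤ α) :
    ∃ d₀ : ℕ, ∀ d ≥ d₀, ∀ (V : Type u) [Fintype V] (C : Type v) [Fintype C] (G : SimpleGraph V)
      (A B : Set V) (𝒢 : SimpleGraph C), (Fintype.card C : ℝ) = α * d → G.IsBipartiteWith A B →
      RegularDeg G d → (d : ℝ) ^ ε < minDeg 𝒢 →
      ∃ (χ : V → C) (H : SimpleGraph V), H ≤ G ∧
        (∀ a ∈ A, (d : ℝ) / 2 ≤ deg H a) ∧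
        (∀ b ∈ B, Set.InjOn χ (H.neighborSet b)) ∧
        ∀ b ∈ B, ∀ c, (minDeg 𝒢 : ℝ) / (2 * α) ≤
          {a | a ∈ H.neighborSet b ∧ 𝒢.Adj (χ a) c}.ncard := by
  classical
  obtain ⟨d₀, hd₀⟩ := exists_forall_mul_pow_mul_exp_neg_pow_le_one hε
    (K := 8 * α) (κ := 1 / (100 * α)) (by positivity) (by positivity) 7
  refine ⟨max d₀ 1, fun d hd V _ C _ G A B 𝒢 hC hAB hG hδ => ?_⟩
  have hsmall : 8 * Fintype.card C * d ^ 6 * Real.exp (-(1 / (100 * α))) ^ minDeg 𝒢 ≤ 1 := by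
    convert hd₀ d (le_of_max_le_left hd) _ hδ.le using 2
    rw [hC]
    ring
  obtain ⟨χ, R, hRN, hinj, hhalf, hshown⟩ := exists_coloring_forall_exists_representatives hα
    hG.isRegularOfDegree (le_of_max_le_right hd) hC (minDeg_le_card_neighborFinset 𝒢) hsmall
  have hR (b) : ∀ a ∈ R b, G.Adj b a := fun a ha => (G.mem_neighborFinset b a).1 (hRN b ha)
  refine ⟨χ, selectionGraph A R, selectionGraph_le hR, fun a ha => ?_, fun b hb => ?_,
    fun b hb c => ?_⟩
  · have hdeg : deg (selectionGraph A R) a = #{b ∈ G.neighborFinset a | a ∈ R b} := by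
      simp [deg, neighborSet_selectionGraph_left hAB hR ha, ← Set.ncard_coe_finset]
    rw [hdeg, div_le_iff₀' two_pos]
    exact_mod_cast hhalf a
  · exact neighborSet_selectionGraph_right hAB hR hb ▸ hinj b
  · have hcount : {a | a ∈ (selectionGraph A R).neighborSet b ∧ 𝒢.Adj (χ a) c}.ncard =
        #{a ∈ R b | χ a ∈ 𝒢.neighborFinset c} := by
      simp [neighborSet_selectionGraph_right hAB hR hb, ← Set.ncard_coe_finset, 𝒢.adj_comm c]
    rw [hcount, div_eq_inv_mul, ← one_div]
    refine le_trans ?_ (hshown b c)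
    gcongr
    exact minDeg_le_card_neighborFinset 𝒢 c

theorem statement3 (ε : ℝ) (hε : 0 < ε) :
    ∃ α₀ : ℕ, 1 ≤ α₀ ∧
      ∀ α : ℕ, α₀ ≤ α →
        ∃ d₀ : ℕ, ∀ d : ℕ, d₀ ≤ d →
          ∀ (V : Type) [Fintype V] (G : SimpleGraph V) (A B : Set V),
            Disjoint A B → A ∪ B = Set.univ →
            (∀ u v : V, G.Adj u v → (u ∈ A ∧ v ∈ B) ∨ (u ∈ B ∧ v ∈ A)) →
            RegularDeg G d →
            ∀ 𝒢 : SimpleGraph (Fin (α * d)),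
              (d : ℝ) ^ ε < (minDeg 𝒢 : ℝ) →
              ∃ (χ : V → Fin (α * d)) (H : SimpleGraph V), H ≤ G ∧
                (∀ a ∈ A, (d : ℝ) / 2 ≤ (deg H a : ℝ)) ∧
                (∀ b ∈ B, Set.InjOn χ (H.neighborSet b)) ∧
                (∀ b ∈ B, ∀ c : Fin (α * d),
                  (minDeg 𝒢 : ℝ) / (2 * (α : ℝ)) ≤
                    (Set.ncard {a | a ∈ H.neighborSet b ∧ 𝒢.Adj (χ a) c} : ℝ)) := by
  refine ⟨64, by norm_num, fun α hα => ?_⟩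
  obtain ⟨d₀, hd₀⟩ := statement3_general hε (α := α) (by exact_mod_cast hα)
  refine ⟨d₀, fun d hd V _ G A B hdisj _ hbip hG 𝒢 hδ => ?_⟩
  exact hd₀ d hd V _ G A B 𝒢 (by simp) ⟨hdisj, hbip⟩ hG hδ
end
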